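/- In the Heisenberg group H^n with a rotationally invariant homogeneous distance, there is a single constant C ∈ [1, 2^{2n+1}] such that S^{2n+1}⌊R = C · H^{2n+1}⌊R for every (H^n, ℝ)-rectifiable set R ⊂ H^n. -/

import Mathlib

open scoped ENNReal

/-- The `n`-th Heisenberg group in exponential coordinates `(x, y, t) ∈ ℝⁿ × ℝⁿ × ℝ`. -/
abbrev Heis (n : ℕ) : Type := (Fin n → ℝ) × (Fin n → ℝ) × ℝ

/-- The Heisenberg group product. -/
noncomputable def heisMul {n : ℕ} (p q : Heis n) : Heis n :=
  (p.1 + q.1, p.2.1 + q.2.1,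
    p.2.2 + q.2.2 + (∑ j, (p.1 j * q.2.1 j - q.1 j * p.2.1 j)) / 2)

/-- The Heisenberg group inverse. -/
noncomputable def heisInv {n : ℕ} (p : Heis n) : Heis n := (-p.1, -p.2.1, -p.2.2)

/-- The Heisenberg dilations `δ_λ(x,y,t) = (λx, λy, λ²t)`. -/
noncomputable def heisDil {n : ℕ} (lam : ℝ) (p : Heis n) : Heis n :=
  (lam • p.1, lam • p.2.1, lam ^ 2 * p.2.2)

/-- The squared Euclidean norm of the horizontal component. -/
noncomputable def horSq {n : ℕ} (x y : Fin n → ℝ) : ℝ := ∑ i, (x i ^ 2 + y i ^ 2)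

/-- The `d`-dimensional spherical Hausdorff measure associated with a distance function
`ρ`, as a set function. -/
noncomputable def sphMeasFun {X : Type*} (ρ : X → X → ℝ) (d : ℝ) (E : Set X) : ℝ≥0∞ :=
  ⨆ (ε : ℝ) (_ : 0 < ε),
    ⨅ (c : ℕ → X) (r : ℕ → ℝ)
      (_ : E ⊆ ⋃ m, {x : X | ρ (c m) x ≤ r m}) (_ : ∀ m, 0 < r m ∧ 2 * r m < ε),
      ∑' m, ENNReal.ofReal (2 * r m) ^ d

/-- The diameter, in `ℝ≥0∞`, of a set with respect to a distance function `ρ`. -/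
noncomputable def diamFun {X : Type*} (ρ : X → X → ℝ) (s : Set X) : ℝ≥0∞ :=
  ⨆ (x : X) (_ : x ∈ s) (y : X) (_ : y ∈ s), ENNReal.ofReal (ρ x y)

/-- The `d`-dimensional Hausdorff measure associated with a distance function `ρ`,
as a set function. -/
noncomputable def hausMeasFun {X : Type*} (ρ : X → X → ℝ) (d : ℝ) (E : Set X) : ℝ≥0∞ :=
  ⨆ (ε : ℝ≥0∞) (_ : 0 < ε),
    ⨅ (t : ℕ → Set X) (_ : E ⊆ ⋃ m, t m) (_ : ∀ m, diamFun ρ (t m) < ε),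
      ∑' m, diamFun ρ (t m) ^ d

/-- A homogeneous morphism `Heis n → ℝ`. -/
def IsHeisHomMorphR {n : ℕ} (L : Heis n → ℝ) : Prop :=
  (∀ p q : Heis n, L (heisMul p q) = L p + L q) ∧
    ∀ lam : ℝ, 0 < lam → ∀ p : Heis n, L (heisDil lam p) = lam * L p

/-- A homogeneous subgroup of `Heis n`. -/
def IsHeisHomSubgroup {n : ℕ} (S : Set (Heis n)) : Prop :=
  (0 : Heis n) ∈ S ∧ (∀ p ∈ S, ∀ q ∈ S, heisMul p q ∈ S) ∧ (∀ p ∈ S, heisInv p ∈ S) ∧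
    ∀ lam : ℝ, 0 < lam → ∀ p ∈ S, heisDil lam p ∈ S

/-- `Sig` is a `C¹_H` hypersurface of `H^n` (with homogeneous distance `ρ`): locally the
noncritical level set of a real-valued `C¹_H` (Pansu differentiable with continuous
differential) function, all of whose points are split-regular. -/
def IsC1HHypersurface {n : ℕ} (ρ : Heis n → Heis n → ℝ) (Sig : Set (Heis n)) : Prop :=
  ∀ p ∈ Sig, ∃ (Ω : Set (Heis n)) (f : Heis n → ℝ) (D : Heis n → Heis n → ℝ),
    IsOpen Ω ∧ p ∈ Ω ∧ Sig ∩ Ω = {x ∈ Ω | f x = 0} ∧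
    (∀ q ∈ Ω, IsHeisHomMorphR (D q) ∧
      ∀ ε : ℝ, 0 < ε → ∃ r > 0, ∀ x : Heis n, ρ q x < r →
        |f x - f q - D q (heisMul (heisInv q) x)| ≤ ε * ρ q x) ∧
    (∀ q ∈ Ω, ∀ ε : ℝ, 0 < ε → ∃ r > 0, ∀ q' ∈ Ω, ρ q q' < r →
      ∀ x : Heis n, |D q x - D q' x| ≤ ε * ρ 0 x) ∧
    (∀ q ∈ Ω, D q ≠ 0 ∧
      ∃ V : Set (Heis n), IsHeisHomSubgroup V ∧
        (∀ x ∈ V, D q x = 0 → x = 0) ∧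
        ∀ g : Heis n, ∃ w : Heis n, D q w = 0 ∧ ∃ v ∈ V, g = heisMul w v)


open scoped ENNReal

section PartA
open Set Filter Topology MeasureTheory

noncomputable def PsiE {X : Type*} (F : Set (Set X × ℝ)) (d ε : ℝ) (A : Set X) : ℝ≥0∞ :=
  ⨅ (c : ℕ → Set X × ℝ) (_ : A ⊆ ⋃ m, (c m).1) (_ : ∀ m, c m ∈ F ∧ (c m).2 < ε),
    ∑' m, ENNReal.ofReal (c m).2 ^ d

noncomputable def Psi {X : Type*} (F : Set (Set X × ℝ)) (d : ℝ) (A : Set X) : ℝ≥0∞ :=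
  ⨆ (ε : ℝ) (_ : 0 < ε), PsiE F d ε A

structure MetFor {X : Type*} [TopologicalSpace X] (ρ : X → X → ℝ) : Prop where
  self : ∀ x, ρ x x = 0
  eq0 : ∀ x y, ρ x y = 0 → x = y
  symm : ∀ x y, ρ x y = ρ y x
  tri : ∀ x y z, ρ x z ≤ ρ x y + ρ y z
  top : ∀ s : Set X, IsOpen s ↔ ∀ x ∈ s, ∃ ε > 0, ∀ y, ρ x y < ε → y ∈ s

structure Gauge {X : Type*} [TopologicalSpace X] (ρ : X → X → ℝ) (F : Set (Set X × ℝ)) :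
    Prop where
  pos : ∀ c ∈ F, 0 < c.2
  diam : ∀ c ∈ F, ∀ x ∈ c.1, ∀ y ∈ c.1, ρ x y ≤ c.2
  ball : ∀ x r, 0 < r → (({y | ρ x y ≤ r}, 2 * r) : Set X × ℝ) ∈ F
  enl : ∀ c ∈ F, ∀ s : ℝ, 0 < s → ∃ E' : Set X, ((E', c.2 + 2 * s) : Set X × ℝ) ∈ F ∧
    ∀ x ∈ c.1, ∀ y, ρ x y ≤ s → y ∈ E'
  clos : ∀ c ∈ F, ∃ E' : Set X, c.1 ⊆ E' ∧ IsClosed E' ∧ ((E', c.2) : Set X × ℝ) ∈ F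

lemma MetFor.nonneg {X : Type*} [TopologicalSpace X] {ρ : X → X → ℝ} (h : MetFor ρ) (x y : X) :
    0 ≤ ρ x y := by
  have := h.tri x y x
  rw [h.self, h.symm y x] at this
  linarith

lemma PsiE_le_nat {X : Type*} {F : Set (Set X × ℝ)} {d ε : ℝ} {A : Set X}
    (c : ℕ → Set X × ℝ) (h1 : A ⊆ ⋃ m, (c m).1) (h2 : ∀ m, c m ∈ F ∧ (c m).2 < ε) :
    PsiE F d ε A ≤ ∑' m, ENNReal.ofReal (c m).2 ^ d :=
  iInf_le_of_le c (iInf_le_of_le h1 (iInf_le_of_le h2 le_rfl))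

lemma exists_small_rpow {d : ℝ} (hd : 0 < d) {η : ℝ≥0∞} (hη : η ≠ 0) {ε : ℝ} (hε : 0 < ε) :
    ∃ r : ℝ, 0 < r ∧ 2 * r < ε ∧ ENNReal.ofReal (2 * r) ^ d < η := by
  have h : Tendsto (fun r : ℝ => ENNReal.ofReal (2 * r) ^ d) (𝓝[>] 0) (𝓝 0) := by
    have : Continuous (fun r : ℝ => ENNReal.ofReal (2 * r) ^ d) := by
      exact (ENNReal.continuous_rpow_const (y := d)).comp
        (ENNReal.continuous_ofReal.comp (continuous_const.mul continuous_id))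
    have h := this.tendsto 0
    simp only [mul_zero, ENNReal.ofReal_zero, ENNReal.zero_rpow_of_pos hd] at h
    exact h.mono_left nhdsWithin_le_nhds
  have h1 := h.eventually_lt_const (pos_iff_ne_zero.2 hη)
  have h2 : ∀ᶠ r : ℝ in 𝓝[>] 0, r ∈ Ioo (0:ℝ) (ε/2) := Ioo_mem_nhdsGT (by linarith)
  obtain ⟨r, hr1, hr2⟩ := (h1.and h2).exists
  exact ⟨r, hr2.1, by linarith [hr2.2], hr1⟩

lemma PsiE_le_countable {X : Type*} [TopologicalSpace X] {ρ : X → X → ℝ} {F : Set (Set X × ℝ)}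
    (hF : Gauge ρ F) [Nonempty X] {d ε : ℝ} (hd : 0 < d) (hε : 0 < ε)
    {A : Set X} {ι : Type*} [Countable ι] (c : ι → Set X × ℝ) (h1 : A ⊆ ⋃ m, (c m).1)
    (h2 : ∀ m, c m ∈ F ∧ (c m).2 < ε) :
    PsiE F d ε A ≤ ∑' m, ENNReal.ofReal (c m).2 ^ d := by
  refine ENNReal.le_of_forall_pos_le_add fun η hη _ => ?_
  obtain ⟨η', hη', hsum⟩ := ENNReal.exists_pos_sum_of_countable (ε := (η : ℝ≥0∞))
    (by simpa using hη.ne') ℕ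
  have hr : ∀ m : ℕ, ∃ r : ℝ, 0 < r ∧ 2 * r < ε ∧ ENNReal.ofReal (2 * r) ^ d < η' m := fun m =>
    exists_small_rpow hd (by simpa using (hη' m).ne') hε
  choose r hr0 hrε hrη using hr
  let x0 : X := Classical.arbitrary X
  let c' : ι ⊕ ℕ → Set X × ℝ := Sum.elim c (fun m => ({y | ρ x0 y ≤ r m}, 2 * r m))
  obtain ⟨e⟩ : Nonempty ((ι ⊕ ℕ) ≃ ℕ) := nonempty_equiv_of_countable
  have := PsiE_le_nat (F := F) (d := d) (ε := ε) (A := A) (fun m => c' (e.symm m)) ?_ ?_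
  · refine this.trans ?_
    rw [e.symm.tsum_eq (fun i => ENNReal.ofReal (c' i).2 ^ d),
      Summable.tsum_sum ENNReal.summable ENNReal.summable]
    refine add_le_add le_rfl ?_
    refine le_trans (ENNReal.tsum_le_tsum fun m => ?_) hsum.le
    exact (hrη m).le
  · intro x hx
    obtain ⟨i, hi⟩ := mem_iUnion.1 (h1 hx)
    refine mem_iUnion.2 ⟨e (Sum.inl i), ?_⟩
    simpa [c'] using hi
  · intro m
    rcases h : e.symm m with i | k
    · simpa [c'] using h2 i
    · exact ⟨hF.ball _ _ (hr0 k), hrε k⟩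

lemma PsiE_anti {X : Type*} {F : Set (Set X × ℝ)} {d ε ε' : ℝ} (h : ε ≤ ε') (A : Set X) :
    PsiE F d ε' A ≤ PsiE F d ε A := by
  refine le_iInf fun c => le_iInf fun h1 => le_iInf fun h2 => ?_
  exact PsiE_le_nat c h1 fun m => ⟨(h2 m).1, (h2 m).2.trans_le h⟩

lemma PsiE_le_Psi {X : Type*} {F : Set (Set X × ℝ)} {d ε : ℝ} (h : 0 < ε) (A : Set X) :
    PsiE F d ε A ≤ Psi F d A := le_iSup₂_of_le ε h le_rfl

lemma Psi_mono {X : Type*} {F : Set (Set X × ℝ)} {d : ℝ} {A B : Set X} (h : A ⊆ B) :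
    Psi F d A ≤ Psi F d B := by
  refine iSup₂_mono fun ε hε => ?_
  refine le_iInf fun c => le_iInf fun h1 => le_iInf fun h2 => PsiE_le_nat c (h.trans h1) h2

lemma exists_cover {X : Type*} {F : Set (Set X × ℝ)} {d ε : ℝ} {A : Set X} {b : ℝ≥0∞}
    (h : PsiE F d ε A < b) : ∃ c : ℕ → Set X × ℝ, A ⊆ ⋃ m, (c m).1 ∧
      (∀ m, c m ∈ F ∧ (c m).2 < ε) ∧ ∑' m, ENNReal.ofReal (c m).2 ^ d < b := by
  simpa only [PsiE, iInf_lt_iff, exists_prop] using h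

lemma Psi_empty {X : Type*} [TopologicalSpace X] {ρ : X → X → ℝ} {F : Set (Set X × ℝ)}
    (hF : Gauge ρ F) [Nonempty X] {d : ℝ} (hd : 0 < d) : Psi F d ∅ = 0 := by
  rw [← nonpos_iff_eq_zero]
  refine iSup₂_le fun ε hε => ?_
  refine (PsiE_le_countable hF hd hε (ι := Empty) (fun i => i.elim) (by simp)
    (fun i => i.elim)).trans ?_
  simp

lemma Psi_iUnion {X : Type*} [TopologicalSpace X] {ρ : X → X → ℝ} {F : Set (Set X × ℝ)}
    (hF : Gauge ρ F) [Nonempty X] {d : ℝ} (hd : 0 < d) (A : ℕ → Set X) :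
    Psi F d (⋃ i, A i) ≤ ∑' i, Psi F d (A i) := by
  refine iSup₂_le fun ε hε => ?_
  refine le_trans ?_ (ENNReal.tsum_le_tsum fun i => PsiE_le_Psi hε (A i))
  refine ENNReal.le_of_forall_pos_le_add fun η hη hfin => ?_
  obtain ⟨η', hη', hsum⟩ := ENNReal.exists_pos_sum_of_countable (ε := (η : ℝ≥0∞))
    (by simpa using hη.ne') ℕ
  have hc : ∀ i, ∃ c : ℕ → Set X × ℝ, A i ⊆ ⋃ m, (c m).1 ∧
      (∀ m, c m ∈ F ∧ (c m).2 < ε) ∧ ∑' m, ENNReal.ofReal (c m).2 ^ d <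
        PsiE F d ε (A i) + η' i := fun i => by
    apply exists_cover
    refine ENNReal.lt_add_right ?_ (by simpa using (hη' i).ne')
    exact (lt_of_le_of_lt (ENNReal.le_tsum i) hfin).ne
  choose c h1 h2 h3 using hc
  refine (PsiE_le_countable hF hd hε (ι := ℕ × ℕ) (fun p => c p.1 p.2) ?_ ?_).trans ?_
  · intro x hx
    obtain ⟨i, hi⟩ := mem_iUnion.1 hx
    obtain ⟨m, hm⟩ := mem_iUnion.1 (h1 i hi)
    exact mem_iUnion.2 ⟨(i, m), hm⟩
  · exact fun p => h2 p.1 p.2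
  · rw [ENNReal.tsum_prod (f := fun i m => ENNReal.ofReal (c i m).2 ^ d)]
    calc _ ≤ ∑' i, (PsiE F d ε (A i) + η' i) := ENNReal.tsum_le_tsum fun i => (h3 i).le
      _ = ∑' i, PsiE F d ε (A i) + ∑' i, (η' i : ℝ≥0∞) := ENNReal.tsum_add
      _ ≤ _ := add_le_add le_rfl hsum.le

noncomputable def PsiOuter {X : Type*} [TopologicalSpace X] {ρ : X → X → ℝ} {F : Set (Set X × ℝ)}
    (hF : Gauge ρ F) [Nonempty X] {d : ℝ} (hd : 0 < d) : OuterMeasure X where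
  measureOf := Psi F d
  empty := Psi_empty hF hd
  mono := Psi_mono
  iUnion_nat := fun A _ => Psi_iUnion hF hd A

lemma Psi_sep {X : Type*} [TopologicalSpace X] {ρ : X → X → ℝ} {F : Set (Set X × ℝ)}
    (hF : Gauge ρ F) [Nonempty X] {d : ℝ} (hd : 0 < d) {s t : Set X} {r : ℝ} (hr : 0 < r)
    (hst : ∀ x ∈ s, ∀ y ∈ t, r ≤ ρ x y) : Psi F d s + Psi F d t ≤ Psi F d (s ∪ t) := by
  have key : ∀ ε, 0 < ε → ε ≤ r → PsiE F d ε s + PsiE F d ε t ≤ Psi F d (s ∪ t) := by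
    intro ε hε hεr
    refine le_trans ?_ (PsiE_le_Psi hε _)
    refine le_iInf fun c => le_iInf fun h1 => le_iInf fun h2 => ?_
    let I : Set ℕ := {m | ((c m).1 ∩ s).Nonempty}
    have hs : PsiE F d ε s ≤ ∑' m : I, ENNReal.ofReal (c m).2 ^ d := by
      refine PsiE_le_countable hF hd hε (fun m : I => c m) ?_ (fun m => h2 m)
      intro x hx
      obtain ⟨m, hm⟩ := mem_iUnion.1 (h1 (Or.inl hx))
      exact mem_iUnion.2 ⟨⟨m, x, hm, hx⟩, hm⟩
    have ht : PsiE F d ε t ≤ ∑' m : (Iᶜ : Set ℕ), ENNReal.ofReal (c m).2 ^ d := by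
      refine PsiE_le_countable hF hd hε (fun m : (Iᶜ : Set ℕ) => c m) ?_ (fun m => h2 m)
      intro x hx
      obtain ⟨m, hm⟩ := mem_iUnion.1 (h1 (Or.inr hx))
      refine mem_iUnion.2 ⟨⟨m, ?_⟩, hm⟩
      rintro ⟨y, hy, hys⟩
      have := hst y hys x hx
      have h3 := hF.diam _ (h2 m).1 y hy x hm
      have h4 := (h2 m).2
      linarith
    refine (add_le_add hs ht).trans ?_
    exact (Summable.tsum_add_tsum_compl (f := fun m => ENNReal.ofReal (c m).2 ^ d) (s := I)
      ENNReal.summable ENNReal.summable).le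
  unfold Psi at *
  refine ENNReal.iSup_add_iSup_le (ι := ℝ) (κ := ℝ) fun ε ε' => ?_
  by_cases h : 0 < ε
  swap
  · simp only [h, iSup_false, bot_eq_zero, zero_add]
    exact (iSup_le fun h' => (PsiE_le_Psi h' t).trans (Psi_mono subset_union_right))
  by_cases h' : 0 < ε'
  swap
  · simp only [h', iSup_false, bot_eq_zero, add_zero]
    exact (iSup_le fun h' => (PsiE_le_Psi h' s).trans (Psi_mono subset_union_left))
  simp only [h, h', iSup_true]
  refine le_trans ?_ (key (min (min ε ε') r) (by positivity) (min_le_right _ _))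
  exact add_le_add (PsiE_anti (min_le_left _ _ |>.trans (min_le_left _ _)) _)
    (PsiE_anti (min_le_left _ _ |>.trans (min_le_right _ _)) _)

lemma Psi_caratheodory {X : Type*} [TopologicalSpace X] [MeasurableSpace X] [BorelSpace X]
    {ρ : X → X → ℝ} (hρ : MetFor ρ) {F : Set (Set X × ℝ)}
    (hF : Gauge ρ F) [Nonempty X] {d : ℝ} (hd : 0 < d) {B : Set X} (hB : MeasurableSet B) :
    (PsiOuter hF hd).IsCaratheodory B := by
  let _ : MetricSpace X :=
    { PseudoMetricSpace.ofDistTopology ρ hρ.self hρ.symm hρ.tri hρ.top with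
      eq_of_dist_eq_zero := fun {x y} h => hρ.eq0 x y h }
  have hm : (PsiOuter hF hd).IsMetric := by
    rintro s t ⟨r, hr0, hr⟩
    refine le_antisymm (measure_union_le _ _) ?_
    rcases eq_or_ne r ⊤ with h | h
    · subst h
      rcases s.eq_empty_or_nonempty with rfl | ⟨x, hx⟩
      · simp
      rcases t.eq_empty_or_nonempty with rfl | ⟨y, hy⟩
      · simp
      exact absurd (hr x hx y hy) (by simp)
    · refine Psi_sep hF hd (r := r.toReal) (ENNReal.toReal_pos hr0 h) fun x hx y hy => ?_
      have := hr x hx y hy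
      rw [edist_dist] at this
      have h2 := ENNReal.toReal_mono ENNReal.ofReal_ne_top this
      rwa [ENNReal.toReal_ofReal dist_nonneg] at h2
  have := hm.borel_le_caratheodory
  refine this B ?_
  rw [← BorelSpace.measurable_eq (α := X)]
  exact hB

lemma Psi_tsum {X : Type*} [TopologicalSpace X] [MeasurableSpace X] [BorelSpace X]
    {ρ : X → X → ℝ} (hρ : MetFor ρ) {F : Set (Set X × ℝ)}
    (hF : Gauge ρ F) [Nonempty X] {d : ℝ} (hd : 0 < d) {B : ℕ → Set X}
    (hB : ∀ i, MeasurableSet (B i)) (hdis : Pairwise (Function.onFun Disjoint B)) (A : Set X) :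
    ∑' i, Psi F d (A ∩ B i) ≤ Psi F d A := by
  refine ENNReal.tsum_le_of_sum_range_le fun k => ?_
  have := (PsiOuter hF hd).isCaratheodory_sum (s := B)
    (fun i => Psi_caratheodory hρ hF hd (hB i)) hdis (t := A) (n := k)
  exact this.le.trans (Psi_mono inter_subset_left)

lemma upper_density {X : Type*} [TopologicalSpace X] [MeasurableSpace X]
    {F : Set (Set X × ℝ)} {d : ℝ} (μ : Measure X) (A : Set X) (k : ℝ≥0∞)
    (hk0 : k ≠ 0) (hk : k ≠ ⊤)
    (h : ∀ x ∈ A, ∃ ε > 0, ∀ e ∈ F, x ∈ e.1 → e.2 < ε → μ e.1 ≤ k * ENNReal.ofReal e.2 ^ d) :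
    μ A ≤ k * Psi F d A := by
  let Ak : ℕ → Set X := fun j => {x ∈ A | ∀ e ∈ F, x ∈ e.1 → e.2 < 1 / ((j : ℝ) + 1) →
    μ e.1 ≤ k * ENNReal.ofReal e.2 ^ d}
  have hA : A = ⋃ j, Ak j := by
    ext x
    simp only [mem_iUnion]
    refine ⟨fun hx => ?_, fun ⟨j, hj⟩ => hj.1⟩
    obtain ⟨ε, hε, h'⟩ := h x hx
    obtain ⟨j, hj⟩ := exists_nat_one_div_lt hε
    exact ⟨j, hx, fun e he hxe hes => h' e he hxe (hes.trans hj)⟩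
  have hmono : Monotone Ak := by
    intro i j hij x hx
    refine ⟨hx.1, fun e he hxe hes => hx.2 e he hxe (hes.trans_le ?_)⟩
    exact Nat.one_div_le_one_div hij
  conv_lhs => rw [hA]
  rw [hmono.measure_iUnion]
  refine iSup_le fun j => ?_
  have h1 : (0:ℝ) < 1 / ((j:ℝ) + 1) := by positivity
  refine le_trans ?_ (mul_le_mul_right ((PsiE_le_Psi h1 _).trans
    (Psi_mono (fun x hx => hx.1 : Ak j ⊆ A))) k)
  rw [← ENNReal.div_le_iff' hk0 hk]
  refine le_iInf fun c => le_iInf fun h1 => le_iInf fun h2 => ?_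
  rw [ENNReal.div_le_iff' hk0 hk, ← ENNReal.tsum_mul_left]
  have hsub : Ak j ⊆ ⋃ m, (c m).1 ∩ Ak j := by
    rw [← iUnion_inter]
    exact subset_inter h1 Subset.rfl
  refine (measure_mono hsub).trans ((measure_iUnion_le _).trans (ENNReal.tsum_le_tsum fun m => ?_))
  rcases ((c m).1 ∩ Ak j).eq_empty_or_nonempty with he | ⟨x, hx1, hx2⟩
  · simp [he]
  · exact (measure_mono inter_subset_left).trans (hx2.2 _ (h2 m).1 hx1 (h2 m).2)

lemma lower_density {X : Type*} [TopologicalSpace X] [MeasurableSpace X] [BorelSpace X]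
    {ρ : X → X → ℝ} (hρ : MetFor ρ) {F : Set (Set X × ℝ)}
    (hF : Gauge ρ F) [Nonempty X] {d : ℝ} (hd : 0 < d) (μ : Measure X) [IsFiniteMeasure μ]
    [μ.OuterRegular] (A : Set X) (k : ℝ≥0∞)
    (hk0 : k ≠ 0) (hk : k ≠ ⊤)
    (h : ∀ x ∈ A, ∀ ε > 0, ∃ e ∈ F, x ∈ e.1 ∧ e.2 < ε ∧ k * ENNReal.ofReal e.2 ^ d ≤ μ e.1) :
    k * Psi F d A ≤ μ A := by
  rw [A.measure_eq_iInf_isOpen μ]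
  refine le_iInf fun V => le_iInf fun hAV => le_iInf fun hV => ?_
  rw [mul_comm, ← ENNReal.le_div_iff_mul_le (Or.inl hk0) (Or.inl hk)]
  refine iSup₂_le fun ε hε => ?_
  let t : Set (Set X × ℝ) := {e | e ∈ F ∧ IsClosed e.1 ∧ e.1.Nonempty ∧ e.1 ⊆ V ∧ e.2 < ε / 6 ∧
    k * ENNReal.ofReal e.2 ^ d ≤ μ e.1}
  have hfine : ∀ x ∈ A, ∀ O : Set X, IsOpen O → x ∈ O → ∃ e ∈ t, x ∈ e.1 ∧ e.1 ⊆ O := by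
    intro x hx O hO hxO
    obtain ⟨r, hr, hrO⟩ := (hρ.top (O ∩ V)).1 (hO.inter hV) x ⟨hxO, hAV hx⟩
    obtain ⟨e, he, hxe, hes, hμ⟩ := h x hx (min r (ε / 6)) (by positivity)
    obtain ⟨E', hE1, hE2, hE3⟩ := hF.clos e he
    have hsub : E' ⊆ O ∩ V := fun y hy =>
      hrO y ((hF.diam _ hE3 x (hE1 hxe) y hy).trans_lt (hes.trans_le (min_le_left _ _)))
    exact ⟨(E', e.2), ⟨hE3, hE2, ⟨x, hE1 hxe⟩, hsub.trans inter_subset_right,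
      hes.trans_le (min_le_right _ _), hμ.trans (measure_mono hE1)⟩, hE1 hxe,
      hsub.trans inter_subset_left⟩
  obtain ⟨u, hut, hdis, hcov⟩ := Vitali.exists_disjoint_subfamily_covering_enlargement
    (Prod.fst : Set X × ℝ → Set X) t Prod.snd 2 (by norm_num) (fun a ha => (hF.pos a ha.1).le)
    (ε / 6) (fun a ha => ha.2.2.2.2.1.le) (fun a ha => ha.2.2.1)
  have hsumμ : ∑' e : u, μ e.1.1 ≤ μ V := by
    refine (tsum_meas_le_meas_iUnion_of_disjoint μ (fun e : u => (hut e.2).2.1.measurableSet)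
      ?_).trans (measure_mono (iUnion_subset fun e => (hut e.2).2.2.2.1))
    intro a b hab
    exact hdis a.2 b.2 (fun h => hab (Subtype.ext h))
  have hsum : ∑' e : u, ENNReal.ofReal e.1.2 ^ d ≤ μ V / k := by
    rw [ENNReal.le_div_iff_mul_le (Or.inl hk0) (Or.inl hk), mul_comm, ← ENNReal.tsum_mul_left]
    exact (ENNReal.tsum_le_tsum fun e => (hut e.2).2.2.2.2.2).trans hsumμ
  have hfin : ∑' e : u, ENNReal.ofReal e.1.2 ^ d ≠ ⊤ :=
    (hsum.trans_lt (ENNReal.div_lt_top (measure_ne_top _ _) hk0)).ne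
  have hcount : Countable u := by
    have := Summable.countable_support_ennreal hfin
    have h2 : Function.support (fun e : u => ENNReal.ofReal e.1.2 ^ d) = univ := by
      refine eq_univ_of_forall fun e => ?_
      have : 0 < ENNReal.ofReal e.1.2 := ENNReal.ofReal_pos.2 (hF.pos _ (hut e.2).1)
      exact (ENNReal.rpow_pos this ENNReal.ofReal_ne_top).ne'
    rw [h2] at this
    exact countable_univ_iff.1 this
  refine le_trans ?_ hsum
  have hen : ∀ e : u, ∃ E' : Set X, ((E', e.1.2 + 2 * (2 * e.1.2)) : Set X × ℝ) ∈ F ∧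
    ∀ x ∈ e.1.1, ∀ y, ρ x y ≤ 2 * e.1.2 → y ∈ E' := fun e =>
      hF.enl e.1 (hut e.2).1 _ (by have := hF.pos _ (hut e.2).1; linarith)
  choose G hG1 hG2 using hen
  have hlim : Tendsto (fun s : Finset u => ∑' e : u, ENNReal.ofReal e.1.2 ^ d +
      ENNReal.ofReal 5 ^ d * ∑' e : {x // x ∉ s}, ENNReal.ofReal e.1.1.2 ^ d) atTop
      (𝓝 (∑' e : u, ENNReal.ofReal e.1.2 ^ d + ENNReal.ofReal 5 ^ d * 0)) := by
    refine tendsto_const_nhds.add (ENNReal.Tendsto.const_mul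
      (ENNReal.tendsto_tsum_compl_atTop_zero hfin) (Or.inr ?_))
    exact ENNReal.rpow_ne_top_of_nonneg hd.le ENNReal.ofReal_ne_top
  rw [mul_zero, add_zero] at hlim
  refine ge_of_tendsto' hlim fun s => ?_
  classical
  let c : u → Set X × ℝ := fun e => if e ∈ s then e.1 else (G e, e.1.2 + 2 * (2 * e.1.2))
  refine (PsiE_le_countable hF hd hε c ?_ ?_).trans ?_
  · intro x hx
    by_cases hxs : ∃ e ∈ s, x ∈ e.1.1
    · obtain ⟨e, hes, hxe⟩ := hxs
      refine mem_iUnion.2 ⟨e, ?_⟩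
      simpa [c, hes] using hxe
    · have hcl : IsClosed (⋃ e ∈ s, e.1.1) :=
        s.finite_toSet.isClosed_biUnion fun e _ => (hut e.2).2.1
      obtain ⟨a, hat, hxa, hsub⟩ := hfine x hx _ hcl.isOpen_compl (by
        simp only [mem_compl_iff, mem_iUnion, not_exists]
        intro e he hxe
        exact hxs ⟨e, he, hxe⟩)
      obtain ⟨b, hbu, ⟨y, hya, hyb⟩, hab⟩ := hcov a hat
      have hbs : (⟨b, hbu⟩ : u) ∉ s := by
        intro hbs
        refine hsub hya ?_
        simp only [mem_iUnion]
        exact ⟨⟨b, hbu⟩, hbs, hyb⟩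
      refine mem_iUnion.2 ⟨⟨b, hbu⟩, ?_⟩
      simp only [c, hbs, if_false]
      exact hG2 ⟨b, hbu⟩ y hyb x ((hF.diam _ hat.1 y hya x hxa).trans hab)
  · intro e
    have h6 := (hut e.2).2.2.2.2.1
    by_cases hes : e ∈ s
    · simp only [c, hes, if_true]
      exact ⟨(hut e.2).1, by linarith⟩
    · simp only [c, hes, if_false]
      exact ⟨hG1 e, by linarith⟩
  · have hle : ∀ e : u, ENNReal.ofReal (c e).2 ^ d ≤ ENNReal.ofReal e.1.2 ^ d +
        ({x | x ∉ s} : Set u).indicator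
          (fun e => ENNReal.ofReal 5 ^ d * ENNReal.ofReal e.1.2 ^ d) e := by
      intro e
      by_cases hes : e ∈ s
      · simp [c, hes]
      · have : (c e).2 = 5 * e.1.2 := by simp only [c, hes, if_false]; ring
        rw [this, ENNReal.ofReal_mul (by norm_num), ENNReal.mul_rpow_of_nonneg _ _ hd.le,
          indicator_of_mem (by exact hes)]
        exact le_add_self
    refine (ENNReal.tsum_le_tsum hle).trans ?_
    rw [ENNReal.tsum_add, ← tsum_subtype, ENNReal.tsum_mul_left]
    exact le_rfl

lemma Psi_image_le {X : Type*} {F : Set (Set X × ℝ)} {d : ℝ} (ψ : X → X)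
    (h : ∀ e ∈ F, ((ψ '' e.1, e.2) : Set X × ℝ) ∈ F) (A : Set X) :
    Psi F d (ψ '' A) ≤ Psi F d A := by
  refine iSup₂_mono fun ε hε => ?_
  refine le_iInf fun c => le_iInf fun h1 => le_iInf fun h2 => ?_
  refine PsiE_le_nat (fun m => (ψ '' (c m).1, (c m).2)) ?_ (fun m => ⟨h _ (h2 m).1, (h2 m).2⟩)
  rw [← image_iUnion]
  exact image_mono h1

lemma Psi_scale {X : Type*} {F F' : Set (Set X × ℝ)} {d : ℝ} (hd : 0 ≤ d) (k : ℝ) (hk : 0 < k)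
    (hne : ∀ e ∈ F, ∃ e' ∈ F', e.1 ⊆ e'.1 ∧ e'.2 = k * e.2) (A : Set X) :
    Psi F' d A ≤ ENNReal.ofReal k ^ d * Psi F d A := by
  have hk0 : ENNReal.ofReal k ^ d ≠ 0 :=
    (ENNReal.rpow_pos (ENNReal.ofReal_pos.2 hk) ENNReal.ofReal_ne_top).ne'
  have hkt : ENNReal.ofReal k ^ d ≠ ⊤ := ENNReal.rpow_ne_top_of_nonneg hd ENNReal.ofReal_ne_top
  refine iSup₂_le fun ε hε => ?_
  refine le_trans ?_ (mul_le_mul_right (PsiE_le_Psi (div_pos hε hk) A) _)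
  rw [← ENNReal.div_le_iff' hk0 hkt]
  refine le_iInf fun c => le_iInf fun h1 => le_iInf fun h2 => ?_
  choose e he1 he2 he3 using fun m => hne (c m) (h2 m).1
  rw [ENNReal.div_le_iff' hk0 hkt, ← ENNReal.tsum_mul_left]
  refine (PsiE_le_nat e (h1.trans (iUnion_mono he2)) fun m => ⟨he1 m, ?_⟩).trans
    (ENNReal.tsum_le_tsum fun m => ?_)
  · rw [he3, mul_comm]
    exact (lt_div_iff₀ hk).1 (h2 m).2
  · rw [he3, ENNReal.ofReal_mul hk.le, ENNReal.mul_rpow_of_nonneg _ _ hd]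

def FS {X : Type*} (ρ : X → X → ℝ) : Set (Set X × ℝ) :=
  {e | ∃ x r, 0 < r ∧ e = ({y | ρ x y ≤ r}, 2 * r)}

def FH {X : Type*} (ρ : X → X → ℝ) : Set (Set X × ℝ) :=
  {e | 0 < e.2 ∧ ∀ x ∈ e.1, ∀ y ∈ e.1, ρ x y ≤ e.2}

lemma sph_eq {X : Type*} (ρ : X → X → ℝ) (d : ℝ) (A : Set X) :
    sphMeasFun ρ d A = Psi (FS ρ) d A := by
  refine iSup_congr fun ε => iSup_congr fun hε => ?_
  refine le_antisymm ?_ ?_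
  · refine le_iInf fun c => le_iInf fun h1 => le_iInf fun h2 => ?_
    choose x r hr he using fun m => (h2 m).1
    refine iInf_le_of_le x (iInf_le_of_le r (iInf_le_of_le ?_ (iInf_le_of_le ?_ ?_)))
    · simpa only [he] using h1
    · intro m
      have := (h2 m).2
      rw [he] at this
      exact ⟨hr m, this⟩
    · simp only [he]; exact le_rfl
  · refine le_iInf fun x => le_iInf fun r => le_iInf fun h1 => le_iInf fun h2 => ?_
    exact PsiE_le_nat (fun m => ({y | ρ (x m) y ≤ r m}, 2 * r m)) h1
      fun m => ⟨⟨x m, r m, (h2 m).1, rfl⟩, (h2 m).2⟩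

lemma haus_eq {X : Type*} (ρ : X → X → ℝ) {d : ℝ} (hd : 0 < d) (A : Set X) :
    hausMeasFun ρ d A = Psi (FH ρ) d A := by
  refine le_antisymm ?_ ?_
  · refine iSup₂_le fun ε hε => ?_
    obtain ⟨ε', hε', hεε⟩ : ∃ ε' : ℝ, 0 < ε' ∧ ENNReal.ofReal ε' ≤ ε := by
      rcases eq_or_ne ε ⊤ with rfl | h
      · exact ⟨1, one_pos, le_top⟩
      · exact ⟨ε.toReal, ENNReal.toReal_pos hε.ne' h, (ENNReal.ofReal_toReal h).le⟩
    refine le_trans ?_ (PsiE_le_Psi hε' A)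
    refine le_iInf fun c => le_iInf fun h1 => le_iInf fun h2 => ?_
    have hdm : ∀ m, diamFun ρ (c m).1 ≤ ENNReal.ofReal (c m).2 := fun m =>
      iSup₂_le fun x hx => iSup₂_le fun y hy => ENNReal.ofReal_le_ofReal ((h2 m).1.2 x hx y hy)
    refine iInf_le_of_le (fun m => (c m).1) (iInf_le_of_le h1 (iInf_le_of_le ?_ ?_))
    · intro m
      exact ((hdm m).trans_lt ((ENNReal.ofReal_lt_ofReal_iff hε').2 (h2 m).2)).trans_le hεε
    · exact ENNReal.tsum_le_tsum fun m => ENNReal.rpow_le_rpow (hdm m) hd.le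
  · refine iSup₂_le fun ε hε => ?_
    refine le_iSup₂_of_le (ENNReal.ofReal ε) (ENNReal.ofReal_pos.2 hε) ?_
    refine le_iInf fun t => le_iInf fun h1 => le_iInf fun h2 => ?_
    refine ENNReal.le_of_forall_pos_le_add fun η hη _ => ?_
    obtain ⟨η', hη', hsum⟩ := ENNReal.exists_pos_sum_of_countable (ε := (η : ℝ≥0∞))
      (by simpa using hη.ne') ℕ
    have hδ : ∀ m, ∃ δ : ℝ, 0 < δ ∧ δ < ε ∧ diamFun ρ (t m) ≤ ENNReal.ofReal δ ∧
        ENNReal.ofReal δ ^ d < diamFun ρ (t m) ^ d + η' m := by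
      intro m
      have hne : diamFun ρ (t m) ≠ ⊤ := (h2 m).ne_top
      set D := (diamFun ρ (t m)).toReal with hD
      have hDe : ENNReal.ofReal D = diamFun ρ (t m) := ENNReal.ofReal_toReal hne
      have hDε : D < ε := (ENNReal.ofReal_lt_ofReal_iff hε).1 (hDe ▸ h2 m)
      have hc : Continuous (fun r : ℝ => ENNReal.ofReal r ^ d) :=
        (ENNReal.continuous_rpow_const (y := d)).comp ENNReal.continuous_ofReal
      have h3 : ∀ᶠ r : ℝ in 𝓝[>] D, ENNReal.ofReal r ^ d < diamFun ρ (t m) ^ d + η' m := by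
        refine ((hc.tendsto D).mono_left nhdsWithin_le_nhds).eventually_lt_const ?_
        rw [hDe]
        exact ENNReal.lt_add_right (ENNReal.rpow_ne_top_of_nonneg hd.le hne)
          (by simpa using (hη' m).ne')
      have h4 : ∀ᶠ r : ℝ in 𝓝[>] D, r ∈ Ioo D ε := Ioo_mem_nhdsGT hDε
      obtain ⟨r, hr1, hr2⟩ := (h3.and h4).exists
      exact ⟨r, ENNReal.toReal_nonneg.trans_lt hr2.1, hr2.2,
        hDe ▸ ENNReal.ofReal_le_ofReal hr2.1.le, hr1⟩
    choose δ hδ0 hδε hδd hδη using hδ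
    have hm : ∀ m, ((t m, δ m) : Set X × ℝ) ∈ FH ρ ∧ δ m < ε := by
      refine fun m => ⟨⟨hδ0 m, fun x hx y hy => ?_⟩, hδε m⟩
      have : ENNReal.ofReal (ρ x y) ≤ ENNReal.ofReal (δ m) :=
        le_trans (le_iSup₂_of_le (f := fun x (_ : x ∈ t m) => ⨆ (y : X) (_ : y ∈ t m),
          ENNReal.ofReal (ρ x y)) x hx
          (le_iSup₂ (f := fun y (_ : y ∈ t m) => ENNReal.ofReal (ρ x y)) y hy)) (hδd m)
      exact (ENNReal.ofReal_le_ofReal_iff (hδ0 m).le).1 this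
    refine (PsiE_le_nat (fun m => (t m, δ m)) h1 hm).trans ?_
    · calc _ ≤ ∑' i, (diamFun ρ (t i) ^ d + η' i) := ENNReal.tsum_le_tsum fun i => (hδη i).le
        _ = ∑' i, diamFun ρ (t i) ^ d + ∑' i, (η' i : ℝ≥0∞) := ENNReal.tsum_add
        _ ≤ _ := add_le_add le_rfl hsum.le

lemma isClosed_ball {X : Type*} [TopologicalSpace X] {ρ : X → X → ℝ} (hρ : MetFor ρ) (x : X)
    (r : ℝ) : IsClosed {y | ρ x y ≤ r} := by
  rw [← isOpen_compl_iff, hρ.top]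
  intro y hy
  simp only [mem_compl_iff, mem_ofPred_eq, not_le] at hy ⊢
  refine ⟨ρ x y - r, by linarith, fun z hz => ?_⟩
  have := hρ.tri x z y
  rw [hρ.symm z y] at this
  linarith

lemma gaugeS {X : Type*} [TopologicalSpace X] {ρ : X → X → ℝ} (hρ : MetFor ρ) :
    Gauge ρ (FS ρ) where
  pos := by rintro _ ⟨x, r, hr, rfl⟩; simpa using hr
  diam := by
    rintro _ ⟨x, r, hr, rfl⟩ y hy z hz
    have := hρ.tri y x z
    rw [hρ.symm y x] at this
    simp only [mem_ofPred_eq] at hy hz ⊢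
    linarith
  ball := fun x r hr => ⟨x, r, hr, rfl⟩
  enl := by
    rintro _ ⟨x, r, hr, rfl⟩ s hs
    refine ⟨{y | ρ x y ≤ r + s}, ⟨x, r + s, by linarith, by ring_nf⟩, fun y hy z hz => ?_⟩
    have := hρ.tri x y z
    simp only [mem_ofPred_eq] at hy ⊢
    linarith
  clos := by
    rintro _ ⟨x, r, hr, rfl⟩
    exact ⟨_, Subset.rfl, isClosed_ball hρ x r, x, r, hr, rfl⟩

lemma gaugeH {X : Type*} [TopologicalSpace X] {ρ : X → X → ℝ} (hρ : MetFor ρ) :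
    Gauge ρ (FH ρ) where
  pos := fun c hc => hc.1
  diam := fun c hc => hc.2
  ball := fun x r hr => by
    refine ⟨by simpa using hr, fun y hy z hz => ?_⟩
    have := hρ.tri y x z
    rw [hρ.symm y x] at this
    simp only [mem_ofPred_eq] at hy hz ⊢
    linarith
  enl := by
    rintro ⟨E, δ⟩ ⟨h0, h⟩ s hs
    simp only at h0 h ⊢
    refine ⟨{y | ∃ x ∈ E, ρ x y ≤ s}, ⟨by simp only; linarith, ?_⟩, fun x hx y hy => ⟨x, hx, hy⟩⟩
    rintro y ⟨x, hx, hxy⟩ z ⟨x', hx', hxz⟩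
    have h1 := hρ.tri y x z
    have h2 := hρ.tri x x' z
    have h3 := h x hx x' hx'
    rw [hρ.symm y x] at h1
    simp only
    linarith
  clos := by
    rintro ⟨E, δ⟩ ⟨h0, h⟩
    simp only at h0 h
    refine ⟨closure E, subset_closure, isClosed_closure, h0, ?_⟩
    simp only
    have h1 : ∀ x ∈ E, ∀ y ∈ closure E, ρ x y ≤ δ := fun x hx =>
      closure_minimal (h x hx) (isClosed_ball hρ x δ)
    intro x hx y hy
    have h2 : closure E ⊆ {z | ρ y z ≤ δ} :=
      closure_minimal (fun z hz => (hρ.symm y z).le.trans (h1 z hz y hy)) (isClosed_ball hρ y δ)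
    exact (hρ.symm x y).le.trans (h2 hx)

end PartA

open scoped ENNReal

section PartB
open Set Filter Topology MeasureTheory

variable {n : ℕ}

lemma hm_assoc (p q r : Heis n) : heisMul (heisMul p q) r = heisMul p (heisMul q r) := by
  unfold heisMul
  refine Prod.ext (by simp [add_assoc]) (Prod.ext (by simp [add_assoc]) ?_)
  simp only [Pi.add_apply]
  have h : ∀ a b c : Fin n → ℝ, ∑ j, a j + ∑ j, b j = ∑ j, (a j + b j) := fun a b _ =>
    Finset.sum_add_distrib.symm
  have : (∑ j, (p.1 j * q.2.1 j - q.1 j * p.2.1 j)) +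
      (∑ j, ((p.1 j + q.1 j) * r.2.1 j - r.1 j * (p.2.1 j + q.2.1 j))) =
      (∑ j, (q.1 j * r.2.1 j - r.1 j * q.2.1 j)) +
      ∑ j, (p.1 j * (q.2.1 j + r.2.1 j) - (q.1 j + r.1 j) * p.2.1 j) := by
    rw [← Finset.sum_add_distrib, ← Finset.sum_add_distrib]
    exact Finset.sum_congr rfl fun j _ => by ring
  linarith

lemma hm_zero (p : Heis n) : heisMul p 0 = p := by
  unfold heisMul
  refine Prod.ext (by simp) (Prod.ext (by simp) (by simp))

lemma zero_hm (p : Heis n) : heisMul 0 p = p := by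
  unfold heisMul
  refine Prod.ext (by simp) (Prod.ext (by simp) (by simp))

lemma inv_hm (p : Heis n) : heisMul (heisInv p) p = 0 := by
  unfold heisMul heisInv
  refine Prod.ext (by simp) (Prod.ext (by simp) ?_)
  simp

lemma hm_inv (p : Heis n) : heisMul p (heisInv p) = 0 := by
  unfold heisMul heisInv
  refine Prod.ext (by simp) (Prod.ext (by simp) ?_)
  simp

lemma inv_hm_cancel (p q : Heis n) : heisMul (heisInv p) (heisMul p q) = q := by
  rw [← hm_assoc, inv_hm, zero_hm]

lemma hm_inv_cancel (p q : Heis n) : heisMul p (heisMul (heisInv p) q) = q := by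
  rw [← hm_assoc, hm_inv, zero_hm]

lemma hm_continuous : Continuous (fun x : Heis n × Heis n => heisMul x.1 x.2) := by
  unfold heisMul
  fun_prop

lemma hm_cont_left (p : Heis n) : Continuous (heisMul p) :=
  hm_continuous.comp (Continuous.prodMk_right p)

lemma dil_continuous (r : ℝ) : Continuous (heisDil r : Heis n → Heis n) := by
  unfold heisDil
  fun_prop

lemma dil_mul (r : ℝ) (p q : Heis n) :
    heisDil r (heisMul p q) = heisMul (heisDil r p) (heisDil r q) := by
  unfold heisMul heisDil
  refine Prod.ext (by simp) (Prod.ext (by simp) ?_)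
  simp only [Pi.smul_apply, smul_eq_mul]
  have : ∑ j, (r * p.1 j * (r * q.2.1 j) - r * q.1 j * (r * p.2.1 j)) =
      r ^ 2 * ∑ j, (p.1 j * q.2.1 j - q.1 j * p.2.1 j) := by
    rw [Finset.mul_sum]
    exact Finset.sum_congr rfl fun j _ => by ring
  rw [this]; ring

lemma dil_zero (r : ℝ) : heisDil r (0 : Heis n) = 0 := by
  unfold heisDil
  refine Prod.ext (by simp) (Prod.ext (by simp) (by simp))

lemma dil_dil (r s : ℝ) (p : Heis n) : heisDil r (heisDil s p) = heisDil (r * s) p := by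
  unfold heisDil
  refine Prod.ext (by simp [mul_smul]) (Prod.ext (by simp [mul_smul]) ?_)
  simp only; ring

lemma dil_one (p : Heis n) : heisDil 1 p = p := by
  unfold heisDil
  refine Prod.ext (by simp) (Prod.ext (by simp) (by simp))

/-- the horizontal one-parameter subgroup -/
noncomputable def es (i : Fin n) (s : ℝ) : Heis n := (Pi.single i s, 0, 0)

lemma hm_es (i : Fin n) (s : ℝ) (p : Heis n) :
    heisMul p (es i s) = (p.1 + Pi.single i s, p.2.1, p.2.2 - s * p.2.1 i / 2) := by
  unfold heisMul es
  refine Prod.ext (by simp) (Prod.ext (by simp) ?_)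
  have : ∑ j, (Pi.single i s : Fin n → ℝ) j * p.2.1 j = s * p.2.1 i := by
    rw [Finset.sum_eq_single i]
    · simp
    · intro j _ hj; simp [hj]
    · simp
  simp [this]; ring

lemma es_add (i : Fin n) (s t : ℝ) : heisMul (es i s) (es i t) = es i (s + t) := by
  rw [hm_es]
  unfold es
  refine Prod.ext (by simp [Pi.single_add]) (Prod.ext (by simp) (by simp))

lemma es_zero (i : Fin n) : es i 0 = 0 := by
  unfold es; simp

lemma es_inv (i : Fin n) (s : ℝ) : heisInv (es i s) = es i (-s) := by
  unfold es heisInv; simp [Pi.single_neg]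

lemma dil_es (i : Fin n) (r s : ℝ) : heisDil r (es i s) = es i (r * s) := by
  unfold es heisDil
  refine Prod.ext ?_ (Prod.ext (by simp) (by simp))
  ext j
  by_cases h : j = i
  · subst h; simp
  · simp [h]

noncomputable def prj (i : Fin n) (p : Heis n) : Heis n := heisMul p (es i (-p.1 i))

lemma prj_eq (i : Fin n) (p : Heis n) :
    prj i p = (p.1 + Pi.single i (-p.1 i), p.2.1, p.2.2 + p.1 i * p.2.1 i / 2) := by
  rw [prj, hm_es]
  refine Prod.ext rfl (Prod.ext rfl ?_)
  simp only; ring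

lemma hm_fst (i : Fin n) (p q : Heis n) : (heisMul p q).1 i = p.1 i + q.1 i := rfl

lemma prj_es (i : Fin n) (p : Heis n) (s : ℝ) : prj i (heisMul p (es i s)) = prj i p := by
  rw [prj, prj, hm_fst, hm_assoc, es_add]
  congr 2
  simp [es]

lemma prj_of_zero (i : Fin n) (p : Heis n) (h : p.1 i = 0) : prj i p = p := by
  rw [prj, h, neg_zero, es_zero, hm_zero]

lemma prj_continuous (i : Fin n) : Continuous (prj i) := by
  have : prj i = fun p => (p.1 + Pi.single i (-p.1 i), p.2.1, p.2.2 + p.1 i * p.2.1 i / 2) := by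
    ext1 p; exact prj_eq i p
  rw [this]
  refine Continuous.prodMk (continuous_fst.add ?_) (by fun_prop)
  exact (continuous_single i).comp (by fun_prop)

noncomputable def tau (i : Fin n) (p g : Heis n) : Heis n :=
  heisMul (heisMul p g) (es i (-p.1 i))

lemma prj_mul (i : Fin n) (p g : Heis n) : prj i (heisMul p g) = tau i p (prj i g) := by
  rw [tau, prj, prj]
  simp only [hm_assoc, es_add, hm_fst]
  congr 3; ring

end PartB

open scoped ENNReal

section PartC
open Set Filter Topology MeasureTheory

variable {n : ℕ}

noncomputable def lamC (i j : Fin n) : Measure ℝ := if j = i then Measure.dirac 0 else volume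

lemma lamC_lf (i j : Fin n) : SigmaFinite (lamC i j) := by
  unfold lamC; split_ifs <;> infer_instance

noncomputable def lamX (i : Fin n) : Measure (Fin n → ℝ) := Measure.pi (lamC i)

noncomputable def lam (i : Fin n) : Measure (Heis n) :=
  (lamX i).prod ((volume : Measure (Fin n → ℝ)).prod (volume : Measure ℝ))

instance lamX_sf (i : Fin n) : SigmaFinite (lamX i) := by
  have := lamC_lf i
  unfold lamX; infer_instance

lemma lamX_trans (i : Fin n) (a : Fin n → ℝ) (ha : a i = 0) :
    MeasurePreserving (fun x => x + a) (lamX i) (lamX i) := by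
  have := lamC_lf i
  have := measurePreserving_pi (lamC i) (lamC i) (f := fun j x => x + a j) (fun j => ?_)
  · exact this
  · unfold lamC
    split_ifs with h
    · subst h; simp only [ha, add_zero]; exact MeasurePreserving.id _
    · exact measurePreserving_add_right volume (a j)

lemma lam_shear (i : Fin n) (a b : Fin n → ℝ) (ha : a i = 0) (h : (Fin n → ℝ) → (Fin n → ℝ) → ℝ)
    (hh : Continuous (Function.uncurry h)) :
    MeasurePreserving (fun p : Heis n => (p.1 + a, p.2.1 + b, p.2.2 + h p.1 p.2.1))
      (lam i) (lam i) := by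
  refine MeasurePreserving.skew_product (f := fun x => x + a)
    (g := fun x (q : (Fin n → ℝ) × ℝ) => (q.1 + b, q.2 + h x q.1)) (lamX_trans i a ha) ?_ ?_
  · refine Continuous.measurable ?_
    have : Continuous (fun z : (Fin n → ℝ) × (Fin n → ℝ) × ℝ => h z.1 z.2.1) :=
      hh.comp (f := fun z : (Fin n → ℝ) × (Fin n → ℝ) × ℝ => (z.1, z.2.1)) (by fun_prop)
    unfold Function.uncurry
    fun_prop
  · refine Eventually.of_forall fun x => ?_
    refine (MeasurePreserving.skew_product (f := fun y => y + b)
      (g := fun y t => t + h x y) (measurePreserving_add_right volume b) ?_ ?_).map_eq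
    · refine Continuous.measurable ?_
      have : Continuous (fun z : (Fin n → ℝ) × ℝ => h x z.1) :=
        hh.comp (f := fun z : (Fin n → ℝ) × ℝ => (x, z.1)) (by fun_prop)
      unfold Function.uncurry
      fun_prop
    · exact Eventually.of_forall fun y => (measurePreserving_add_right volume (h x y)).map_eq

lemma tau_mp (i : Fin n) (p : Heis n) : MeasurePreserving (tau i p) (lam i) (lam i) := by
  have := lam_shear i (p.1 + Pi.single i (-p.1 i)) p.2.1 (by simp)
    (fun x y => p.2.2 + (∑ j, (p.1 j * y j - x j * p.2.1 j)) / 2 + p.1 i * (p.2.1 i + y i) / 2)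
    (by unfold Function.uncurry; fun_prop)
  convert this using 2 with g
  rw [tau, hm_es]
  unfold heisMul
  refine Prod.ext ?_ (Prod.ext ?_ ?_)
  · simp only; abel
  · simp only; abel
  · simp only [Pi.add_apply]; ring

noncomputable def tauEquiv (i : Fin n) (p : Heis n) : Heis n ≃ᵐ Heis n where
  toFun := tau i p
  invFun := fun g => heisMul (heisInv p) (heisMul g (es i (p.1 i)))
  left_inv := fun g => by
    show heisMul (heisInv p) (heisMul (tau i p g) (es i (p.1 i))) = g
    rw [tau, hm_assoc _ (es _ _), es_add, neg_add_cancel, es_zero, hm_zero, inv_hm_cancel]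
  right_inv := fun g => by
    rw [tau, hm_inv_cancel, hm_assoc, es_add, add_neg_cancel, es_zero, hm_zero]
  measurable_toFun := (tau_mp i p).measurable
  measurable_invFun := by
    refine Continuous.measurable ((hm_cont_left _).comp ?_)
    exact hm_continuous.comp (Continuous.prodMk_left _)

lemma lam_prj_mul (i : Fin n) (p : Heis n) (A : Set (Heis n)) :
    lam i (prj i '' (heisMul p '' A)) = lam i (prj i '' A) := by
  have h1 : prj i '' (heisMul p '' A) = tauEquiv i p '' (prj i '' A) := by
    rw [image_image, image_image]
    exact image_congr fun g _ => prj_mul i p g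
  have h2 : MeasurePreserving (tauEquiv i p) (lam i) (lam i) := tau_mp i p
  rw [h1, ← h2.measure_preimage_equiv, preimage_image_eq _ (tauEquiv i p).injective]

lemma lam_W (i : Fin n) : lam i {p | p.1 i ≠ 0} = 0 := by
  have := lamC_lf i
  have h : {p : Heis n | p.1 i ≠ 0} = {x : Fin n → ℝ | x i ≠ 0} ×ˢ univ := by
    ext p; simp
  have h2 : {x : Fin n → ℝ | x i ≠ 0} = (Function.eval i) ⁻¹' {0}ᶜ := by
    ext p; simp
  rw [h, lam, Measure.prod_prod, h2]
  have : lamX i (Function.eval i ⁻¹' {0}ᶜ) = 0 := by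
    refine (Measure.quasiMeasurePreserving_eval (lamC i) i).preimage_null ?_
    simp [lamC]
  rw [this, zero_mul]

lemma lam_inter_W (i : Fin n) (E : Set (Heis n)) : lam i (E ∩ {p | p.1 i = 0}) = lam i E := by
  refine measure_inter_conull ?_
  exact lam_W i

lemma lamX_dil (i : Fin n) (r : ℝ) (hr : 0 < r) :
    (lamX i).map (fun x => r • x) = ENNReal.ofReal (r⁻¹ ^ (n - 1)) • lamX i := by
  have := lamC_lf i
  have hmap : ∀ j, (lamC i j).map (fun x => r * x) =
      (if j = i then 1 else ENNReal.ofReal r⁻¹) • lamC i j := by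
    intro j
    unfold lamC
    split_ifs with h
    · rw [Measure.map_dirac' (by fun_prop)]; simp
    · have := Measure.map_addHaar_smul (volume : Measure ℝ) hr.ne'
      simpa [abs_of_pos hr] using this
  have hsf : ∀ j, SigmaFinite ((lamC i j).map (fun x => r * x)) := by
    intro j; rw [hmap j]; split_ifs
    · simpa using lamC_lf i j
    · have : ENNReal.ofReal r⁻¹ ≠ ⊤ := ENNReal.ofReal_ne_top
      lift ENNReal.ofReal r⁻¹ to NNReal using this with c
      have := lamC_lf i j
      exact inferInstanceAs (SigmaFinite (c • lamC i j))
  have h1 : (lamX i).map (fun x => r • x) = Measure.pi (fun j => (lamC i j).map (fun x => r * x)) :=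
    Measure.pi_map_pi (hμ := hsf) (f := fun _ x => r * x) (fun j => by fun_prop)
  rw [h1]
  refine Measure.pi_eq fun s hs => ?_
  simp only [hmap]
  simp only [Measure.smul_apply, smul_eq_mul, Finset.prod_mul_distrib]
  rw [lamX, Measure.pi_pi]
  congr 1
  rw [Finset.prod_ite, Finset.prod_const_one, one_mul, Finset.prod_const,
    ENNReal.ofReal_pow (by positivity)]
  congr 1
  rw [Finset.filter_ne', Finset.card_erase_of_mem (Finset.mem_univ _)]
  simp

lemma lam_dil_map (i : Fin n) (r : ℝ) (hr : 0 < r) :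
    (lam i).map (heisDil r) = ENNReal.ofReal (r⁻¹ ^ (2 * n + 1)) • lam i := by
  have h0 : (heisDil r : Heis n → Heis n) = Prod.map (fun x => r • x)
    (Prod.map (fun y => r • y) (fun t => r ^ 2 • t)) := rfl
  have h2 := Measure.map_addHaar_smul (volume : Measure ℝ) (pow_pos hr 2).ne'
  have h3 := Measure.map_addHaar_smul (volume : Measure (Fin n → ℝ)) hr.ne'
  have h4 := lamX_dil i r hr
  rw [h0, lam]
  rw [← Measure.map_prod_map _ _ (by fun_prop) (by fun_prop),
    ← Measure.map_prod_map _ _ (by fun_prop) (by fun_prop), h2, h3, h4]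
  rw [Measure.prod_smul_right, Measure.prod_smul_left, Measure.prod_smul_left,
    Measure.prod_smul_right, Measure.prod_smul_right, smul_smul, smul_smul]
  congr 1
  have hn : n = (n - 1) + 1 := by have := i.2; omega
  rw [← ENNReal.ofReal_mul (by positivity), ← ENNReal.ofReal_mul (by positivity)]
  congr 1
  simp only [Module.finrank_self, Module.finrank_fin_fun, pow_one]
  rw [abs_of_pos (by positivity), abs_of_pos (by positivity), ← inv_pow, ← inv_pow, ← pow_add,
    ← pow_add]
  congr 1
  omega

lemma lam_dil (i : Fin n) (r : ℝ) (hr : 0 < r) (B : Set (Heis n)) :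
    lam i (heisDil r '' B) = ENNReal.ofReal r ^ (2 * (n : ℝ) + 1) * lam i B := by
  let e : Heis n ≃ᵐ Heis n :=
    { toFun := heisDil r
      invFun := heisDil r⁻¹
      left_inv := fun g => by rw [dil_dil, inv_mul_cancel₀ hr.ne', dil_one]
      right_inv := fun g => by rw [dil_dil, mul_inv_cancel₀ hr.ne', dil_one]
      measurable_toFun := (dil_continuous r).measurable
      measurable_invFun := (dil_continuous r⁻¹).measurable }
  have h1 : lam i B = (lam i).map e (heisDil r '' B) := by
    rw [e.map_apply]
    congr 1
    exact (preimage_image_eq B e.injective).symm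
  have h2 : (lam i).map e = ENNReal.ofReal (r⁻¹ ^ (2 * n + 1)) • lam i := lam_dil_map i r hr
  rw [h1, h2, Measure.smul_apply, smul_eq_mul, ← mul_assoc]
  have h3 : ENNReal.ofReal r ^ (2 * (n : ℝ) + 1) = ENNReal.ofReal (r ^ (2 * n + 1)) := by
    rw [ENNReal.ofReal_pow hr.le, ← ENNReal.rpow_natCast]
    push_cast; rfl
  rw [h3, ← ENNReal.ofReal_mul (by positivity), ← mul_pow, mul_inv_cancel₀ hr.ne']
  simp

lemma heis_ball (r : ℝ) (hr : 0 < r) : Metric.ball (0 : Heis n) r =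
    (univ.pi fun _ => Metric.ball (0:ℝ) r) ×ˢ (Metric.ball 0 r ×ˢ Metric.ball 0 r) := by
  rw [show (0 : Heis n) = (0, 0, 0) from rfl, ← ball_prod_same, ← ball_prod_same, 
    ← ball_pi _ hr]
  rfl

lemma lam_ball (i : Fin n) (r : ℝ) (hr : 0 < r) :
    0 < lam i (Metric.ball (0 : Heis n) r) ∧ lam i (Metric.ball (0 : Heis n) r) < ⊤ := by
  have := lamC_lf i
  rw [heis_ball r hr, lam, Measure.prod_prod, Measure.prod_prod, lamX, Measure.pi_pi]
  have h1 : ∀ j, 0 < lamC i j (Metric.ball 0 r) ∧ lamC i j (Metric.ball 0 r) < ⊤ := by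
    intro j; unfold lamC; split_ifs
    · simp [hr]
    · exact ⟨Metric.measure_ball_pos _ _ hr, measure_ball_lt_top⟩
  have h2 : (volume (Metric.ball (0:Fin n → ℝ) r)) < ⊤ := measure_ball_lt_top
  have h3 : (volume (Metric.ball (0:ℝ) r)) < ⊤ := measure_ball_lt_top
  have h4 : 0 < (volume (Metric.ball (0:Fin n → ℝ) r)) := Metric.measure_ball_pos _ _ hr
  have h5 : 0 < (volume (Metric.ball (0:ℝ) r)) := Metric.measure_ball_pos _ _ hr
  constructor
  · refine ENNReal.mul_pos ?_ (ENNReal.mul_pos h4.ne' h5.ne').ne'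
    exact Finset.prod_ne_zero_iff.2 fun j _ => (h1 j).1.ne'
  · exact ENNReal.mul_lt_top (ENNReal.prod_lt_top fun j _ => (h1 j).2) (ENNReal.mul_lt_top h2 h3)

end PartC

open scoped ENNReal

section PartD
open Set Filter Topology MeasureTheory

variable {n : ℕ}

structure HD (ρ : Heis n → Heis n → ℝ) : Prop where
  zero : ∀ p q : Heis n, ρ p q = 0 ↔ p = q
  symm : ∀ p q : Heis n, ρ p q = ρ q p
  tri : ∀ p q r : Heis n, ρ p r ≤ ρ p q + ρ q r
  left : ∀ g p q : Heis n, ρ (heisMul g p) (heisMul g q) = ρ p q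
  hom : ∀ lam : ℝ, 0 < lam → ∀ p q : Heis n, ρ (heisDil lam p) (heisDil lam q) = lam * ρ p q
  rot : ∀ (x y x' y' : Fin n → ℝ) (t : ℝ), horSq x y = horSq x' y' →
      ρ 0 (x, y, t) = ρ 0 (x', y', t)

variable {ρ : Heis n → Heis n → ℝ} (h : HD ρ)
include h

lemma HD.nonneg (p q : Heis n) : 0 ≤ ρ p q := by
  have := h.tri p q p
  rw [(h.zero p p).2 rfl, h.symm q p] at this
  linarith

lemma HD.eqN (p q : Heis n) : ρ p q = ρ 0 (heisMul (heisInv p) q) := by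
  rw [← h.left (heisInv p) p q, inv_hm]

lemma HD.mulN (p q : Heis n) : ρ p (heisMul p q) = ρ 0 q := by
  rw [h.eqN, inv_hm_cancel]

lemma HD.N_mul (p q : Heis n) : ρ 0 (heisMul p q) ≤ ρ 0 p + ρ 0 q := by
  have := h.tri 0 p (heisMul p q)
  rwa [h.mulN] at this

lemma HD.N_inv (p : Heis n) : ρ 0 (heisInv p) = ρ 0 p := by
  rw [← h.left p 0 (heisInv p), hm_zero, hm_inv, h.symm]

lemma HD.N_dil (r : ℝ) (hr : 0 < r) (p : Heis n) : ρ 0 (heisDil r p) = r * ρ 0 p := by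
  rw [← h.hom r hr, dil_zero]

lemma HD.N_pos (p : Heis n) (hp : p ≠ 0) : 0 < ρ 0 p :=
  lt_of_le_of_ne (h.nonneg 0 p) fun h0 => hp ((h.zero 0 p).1 h0.symm).symm

lemma HD.N1_pos (i : Fin n) : 0 < ρ 0 (es i 1) := by
  refine h.N_pos _ fun h0 => ?_
  have : (es i 1).1 i = 0 := by rw [h0]; rfl
  simp [es] at this

lemma HD.Nt_pos : 0 < ρ 0 ((0, 0, 1) : Heis n) := by
  refine h.N_pos _ fun h0 => ?_
  have : ((0, 0, 1) : Heis n).2.2 = 0 := by rw [h0]; rfl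
  simp at this

lemma HD.N_es (i : Fin n) (s : ℝ) : ρ 0 (es i s) = |s| * ρ 0 (es i 1) := by
  rcases lt_trichotomy s 0 with hs | hs | hs
  · rw [← h.N_inv, es_inv, abs_of_neg hs, ← h.N_dil _ (neg_pos.2 hs), dil_es, mul_one]
  · subst hs; rw [es_zero]; simp [(h.zero 0 0).2 rfl]
  · rw [abs_of_pos hs, ← h.N_dil _ hs, dil_es, mul_one]

lemma HD.N_hor (i : Fin n) (x y : Fin n → ℝ) :
    ρ 0 (x, y, 0) = √(horSq x y) * ρ 0 (es i 1) := by
  have h0 : 0 ≤ horSq x y := Finset.sum_nonneg fun j _ => by positivity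
  rw [← abs_of_nonneg (Real.sqrt_nonneg (horSq x y)), ← h.N_es]
  refine h.rot _ _ _ _ _ ?_
  conv_rhs => rw [horSq]
  rw [Finset.sum_eq_single i]
  · simp [Real.sq_sqrt h0]
  · intro j _ hj; simp [hj]
  · simp

lemma HD.N_ver (t : ℝ) : ρ 0 ((0, 0, t) : Heis n) = √|t| * ρ 0 ((0, 0, 1) : Heis n) := by
  rcases lt_trichotomy t 0 with hs | hs | hs
  · have : ((0, 0, t) : Heis n) = heisInv (heisDil (√|t|) (0, 0, 1)) := by
      unfold heisDil heisInv
      simp [abs_of_neg hs, Real.sq_sqrt (neg_pos.2 hs).le]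
    rw [this, h.N_inv, h.N_dil]
    exact Real.sqrt_pos.2 (abs_pos.2 hs.ne)
  · subst hs
    have := (h.zero 0 0).2 rfl
    rw [show ((0, 0, 0) : Heis n) = 0 from rfl, this]; simp
  · have : ((0, 0, t) : Heis n) = (heisDil (√|t|) (0, 0, 1)) := by
      unfold heisDil
      simp [abs_of_pos hs, Real.sq_sqrt hs.le]
    rw [this, h.N_dil]
    exact Real.sqrt_pos.2 (abs_pos.2 hs.ne')

omit h in
lemma hm_ver (x y : Fin n → ℝ) (s t : ℝ) :
    heisMul (x, y, s) ((0, 0, t) : Heis n) = (x, y, s + t) := by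
  unfold heisMul; simp

lemma HD.N_le (i : Fin n) (g : Heis n) :
    ρ 0 g ≤ √(horSq g.1 g.2.1) * ρ 0 (es i 1) + √|g.2.2| * ρ 0 ((0, 0, 1) : Heis n) := by
  rw [← h.N_hor, ← h.N_ver]
  have := h.N_mul (g.1, g.2.1, 0) (0, 0, g.2.2)
  rwa [hm_ver, zero_add] at this

lemma HD.le_N_ver (g : Heis n) : √|g.2.2| * ρ 0 ((0, 0, 1) : Heis n) ≤ 2 * ρ 0 g := by
  have h1 := h.N_mul (g.1, g.2.1, g.2.2) (-g.1, -g.2.1, g.2.2)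
  have h2 : heisMul (g.1, g.2.1, g.2.2) (-g.1, -g.2.1, g.2.2) = ((0, 0, 2 * g.2.2) : Heis n) := by
    unfold heisMul
    refine Prod.ext (by simp) (Prod.ext (by simp) ?_)
    simp; ring
  rw [h2, h.N_ver, h.rot (-g.1) (-g.2.1) g.1 g.2.1 g.2.2 (by simp [horSq])] at h1
  have h3 : √|g.2.2| ≤ √|2 * g.2.2| := by
    apply Real.sqrt_le_sqrt
    rw [abs_mul, abs_two]; linarith [abs_nonneg g.2.2]
  have := mul_le_mul_of_nonneg_right h3 h.Nt_pos.le
  have h4 : ρ 0 (g.1, g.2.1, g.2.2) = ρ 0 g := rfl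
  linarith

lemma HD.le_N_hor (i : Fin n) (g : Heis n) :
    √(horSq g.1 g.2.1) * ρ 0 (es i 1) ≤ 3 * ρ 0 g := by
  have h1 := h.N_mul (g.1, g.2.1, g.2.2) (0, 0, -g.2.2)
  rw [hm_ver, add_neg_cancel, h.N_hor i, h.N_ver, abs_neg] at h1
  have := h.le_N_ver g
  have h4 : ρ 0 (g.1, g.2.1, g.2.2) = ρ 0 g := rfl
  linarith

lemma HD.norm_le (i : Fin n) (g : Heis n) (r : ℝ) (hg : ρ 0 g ≤ r) :
    ‖g‖ ≤ max (3 * r / ρ 0 (es i 1)) ((2 * r / ρ 0 ((0, 0, 1) : Heis n)) ^ 2) := by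
  have h1 : √(horSq g.1 g.2.1) ≤ 3 * r / ρ 0 (es i 1) := by
    rw [le_div_iff₀ (h.N1_pos i)]
    linarith [h.le_N_hor i g]
  have h2 : √|g.2.2| ≤ 2 * r / ρ 0 ((0, 0, 1) : Heis n) := by
    rw [le_div_iff₀ h.Nt_pos]
    linarith [h.le_N_ver g]
  have h3 : ∀ j, g.1 j ^ 2 + g.2.1 j ^ 2 ≤ horSq g.1 g.2.1 := fun j =>
    Finset.single_le_sum (f := fun j => g.1 j ^ 2 + g.2.1 j ^ 2)
      (fun j _ => by positivity) (Finset.mem_univ j)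
  have h0 : 0 ≤ 3 * r / ρ 0 (es i 1) := (Real.sqrt_nonneg _).trans h1
  refine max_le (le_max_of_le_left ?_) (max_le (le_max_of_le_left ?_) (le_max_of_le_right ?_))
  · refine (pi_norm_le_iff_of_nonneg h0).2 fun j => (Real.abs_le_sqrt ?_).trans h1
    nlinarith [h3 j, sq_nonneg (g.2.1 j)]
  · refine (pi_norm_le_iff_of_nonneg h0).2 fun j => (Real.abs_le_sqrt ?_).trans h1
    nlinarith [h3 j, sq_nonneg (g.1 j)]
  · have := pow_le_pow_left₀ (Real.sqrt_nonneg _) h2 2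
    rwa [Real.sq_sqrt (abs_nonneg _)] at this

lemma HD.small (i : Fin n) (η : ℝ) (hη : 0 < η) : ∃ ε > 0, ∀ g : Heis n, ρ 0 g < ε → ‖g‖ < η := by
  have hc : Continuous (fun r : ℝ => max (3 * r / ρ 0 (es i 1))
    ((2 * r / ρ 0 ((0, 0, 1) : Heis n)) ^ 2)) := by fun_prop
  have := (hc.tendsto 0).eventually (gt_mem_nhds (a := η) (by simpa using hη))
  obtain ⟨ε, hε, he⟩ := Metric.eventually_nhds_iff.1 this
  refine ⟨ε, hε, fun g hg => (h.norm_le i g _ le_rfl).trans_lt (he ?_)⟩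
  rw [Real.dist_eq, sub_zero, abs_of_nonneg (h.nonneg _ _)]; exact hg

lemma HD.nhd (i : Fin n) (x : Heis n) (ε : ℝ) (hε : 0 < ε) : ∀ᶠ y in 𝓝 x, ρ x y < ε := by
  have hc : Continuous (fun y : Heis n =>
    √(horSq (heisMul (heisInv x) y).1 (heisMul (heisInv x) y).2.1) * ρ 0 (es i 1) +
    √|(heisMul (heisInv x) y).2.2| * ρ 0 ((0, 0, 1) : Heis n)) := by
    have := hm_cont_left (heisInv x)
    unfold horSq
    fun_prop
  have := (hc.tendsto x).eventually (gt_mem_nhds (a := ε) (by rw [inv_hm]; simpa [horSq] using hε))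
  filter_upwards [this] with y hy
  rw [h.eqN]
  exact (h.N_le i _).trans_lt hy

lemma HD.nhd' (i : Fin n) (x : Heis n) {s : Set (Heis n)} (hs : s ∈ 𝓝 x) :
    ∃ ε > 0, ∀ y, ρ x y < ε → y ∈ s := by
  have h1 : heisMul x ⁻¹' s ∈ 𝓝 0 := (hm_cont_left x).continuousAt (by rwa [hm_zero])
  obtain ⟨η, hη, h2⟩ := Metric.mem_nhds_iff.1 h1
  obtain ⟨ε, hε, h3⟩ := h.small i η hη
  refine ⟨ε, hε, fun y hy => ?_⟩
  rw [h.eqN] at hy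
  have := h2 (mem_ball_zero_iff.2 (h3 _ hy))
  rwa [mem_preimage, hm_inv_cancel] at this

lemma HD.metFor (i : Fin n) : MetFor ρ where
  self := fun x => (h.zero x x).2 rfl
  eq0 := fun x y => (h.zero x y).1
  symm := h.symm
  tri := h.tri
  top := fun s => by
    refine ⟨fun hs x hx => h.nhd' i x (hs.mem_nhds hx), fun hs => isOpen_iff_mem_nhds.2 fun x hx => ?_⟩
    obtain ⟨ε, hε, he⟩ := hs x hx
    filter_upwards [h.nhd i x ε hε] with y hy using he y hy

omit h in
/-- a gauge family invariant under translations, dilations, isometries -/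
structure GInv (ρ : Heis n → Heis n → ℝ) (F : Set (Set (Heis n) × ℝ)) : Prop extends Gauge ρ F where
  iso : ∀ (ψ : Heis n → Heis n), Function.Surjective ψ → (∀ x y, ρ (ψ x) (ψ y) = ρ x y) →
    ∀ e ∈ F, (ψ '' e.1, e.2) ∈ F
  dil : ∀ r : ℝ, 0 < r → ∀ e ∈ F, (heisDil r '' e.1, r * e.2) ∈ F

omit h in
lemma GInv.trans {F : Set (Set (Heis n) × ℝ)} (hF : GInv ρ F) (h : HD ρ) (p : Heis n)
    {E : Set (Heis n)} {δ : ℝ} (he : (E, δ) ∈ F) : (heisMul p '' E, δ) ∈ F :=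
  hF.iso (heisMul p) (fun y => ⟨_, hm_inv_cancel p y⟩) (h.left p) _ he

lemma HD.gS (i : Fin n) : GInv ρ (FS ρ) where
  toGauge := gaugeS (h.metFor i)
  iso := by
    rintro ψ hs hψ _ ⟨x, r, hr, rfl⟩
    refine ⟨ψ x, r, hr, Prod.ext ?_ rfl⟩
    ext y
    obtain ⟨z, rfl⟩ := hs y
    constructor
    · rintro ⟨w, hw, hwz⟩
      have : ρ (ψ x) (ψ w) ≤ r := by rw [hψ]; exact hw
      rw [hwz] at this; exact this
    · intro hz
      refine ⟨z, ?_, rfl⟩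
      have : ρ (ψ x) (ψ z) ≤ r := hz
      rwa [hψ] at this
  dil := by
    rintro k hk _ ⟨x, r, hr, rfl⟩
    refine ⟨heisDil k x, k * r, by positivity, Prod.ext ?_ (by simp; ring)⟩
    ext y
    have hy : heisDil k (heisDil k⁻¹ y) = y := by rw [dil_dil, mul_inv_cancel₀ hk.ne', dil_one]
    constructor
    · rintro ⟨w, hw, rfl⟩
      show ρ _ _ ≤ _
      rw [h.hom k hk]
      exact mul_le_mul_of_nonneg_left hw hk.le
    · intro hz
      refine ⟨heisDil k⁻¹ y, ?_, hy⟩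
      have hz : ρ (heisDil k x) y ≤ k * r := hz
      rw [← hy, h.hom k hk] at hz
      exact le_of_mul_le_mul_left hz hk

lemma HD.gH (i : Fin n) : GInv ρ (FH ρ) where
  toGauge := gaugeH (h.metFor i)
  iso := by
    rintro ψ hs hψ e ⟨h1, h2⟩
    refine ⟨h1, ?_⟩
    rintro _ ⟨x, hx, rfl⟩ _ ⟨y, hy, rfl⟩
    rw [hψ]; exact h2 x hx y hy
  dil := by
    rintro k hk e ⟨h1, h2⟩
    refine ⟨mul_pos hk h1, ?_⟩
    rintro _ ⟨x, hx, rfl⟩ _ ⟨y, hy, rfl⟩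
    rw [h.hom k hk]; exact mul_le_mul_of_nonneg_left (h2 x hx y hy) hk.le

omit h in
noncomputable def Tht (i : Fin n) (F : Set (Set (Heis n) × ℝ)) : ℝ≥0∞ :=
  ⨆ (E : Set (Heis n)) (_ : (E, (1:ℝ)) ∈ F), lam i E

omit h in
lemma Tht_le (i : Fin n) {F : Set (Set (Heis n) × ℝ)} (hF : GInv ρ F) {E : Set (Heis n)} {δ : ℝ}
    (he : (E, δ) ∈ F) : lam i E ≤ Tht i F * ENNReal.ofReal δ ^ (2 * (n : ℝ) + 1) := by
  have hδ : 0 < δ := hF.pos _ he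
  have h1 := hF.dil δ⁻¹ (inv_pos.2 hδ) _ he
  simp only [inv_mul_cancel₀ hδ.ne'] at h1
  have h2 : E = heisDil δ '' (heisDil δ⁻¹ '' E) := by
    rw [image_image]
    simp [dil_dil, mul_inv_cancel₀ hδ.ne', dil_one]
  rw [h2, lam_dil i δ hδ, mul_comm]
  gcongr
  exact le_iSup₂_of_le (f := fun (E : Set (Heis n)) (_ : (E, (1:ℝ)) ∈ F) => lam i E) _ h1 le_rfl

lemma Tht_pos (i : Fin n) {F : Set (Set (Heis n) × ℝ)} (hF : GInv ρ F) : Tht i F ≠ 0 := by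
  have h1 := hF.ball 0 (1/2) (by norm_num)
  rw [show (2:ℝ) * (1/2) = 1 by norm_num] at h1
  obtain ⟨η, hη, h2⟩ := Metric.eventually_nhds_iff_ball.1 (h.nhd i 0 (1/2) (by norm_num))
  have h3 := (lam_ball (n := n) i η hη).1
  refine (h3.trans_le ?_).ne'
  refine le_iSup₂_of_le (f := fun (E : Set (Heis n)) (_ : (E, (1:ℝ)) ∈ F) => lam i E) _ h1 ?_
  exact measure_mono fun y hy => (h2 y hy).le

/-- translation to have `0` inside -/
lemma lam_trans_W (i : Fin n) (w : Heis n) (hw : w.1 i = 0) (E : Set (Heis n)) :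
    lam i (heisMul w '' E) = lam i E := by
  have hW : ∀ E : Set (Heis n), prj i '' (E ∩ {p | p.1 i = 0}) = E ∩ {p | p.1 i = 0} := by
    intro E
    ext y
    constructor
    · rintro ⟨x, hx, rfl⟩
      rw [prj_of_zero i x hx.2]; exact hx
    · intro hy; exact ⟨y, hy, prj_of_zero i y hy.2⟩
  have h1 := lam_prj_mul i w (E ∩ {p | p.1 i = 0})
  have h2 : heisMul w '' (E ∩ {p | p.1 i = 0}) = (heisMul w '' E) ∩ {p | p.1 i = 0} := by
    ext y
    constructor
    · rintro ⟨x, ⟨hx, hx0⟩, rfl⟩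
      have hx0 : x.1 i = 0 := hx0
      exact ⟨⟨x, hx, rfl⟩, by show (heisMul w x).1 i = 0; rw [hm_fst, hw, hx0, add_zero]⟩
    · rintro ⟨⟨x, hx, rfl⟩, hy⟩
      have hy : (heisMul w x).1 i = 0 := hy
      rw [hm_fst, hw, zero_add] at hy
      exact ⟨x, ⟨hx, hy⟩, rfl⟩
  rwa [h2, hW, hW, lam_inter_W, lam_inter_W] at h1

lemma Tht_top (i : Fin n) {F : Set (Set (Heis n) × ℝ)} (hF : GInv ρ F) : Tht i F ≠ ⊤ := by
  set M := max (3 * 1 / ρ 0 (es i 1)) ((2 * 1 / ρ 0 ((0, 0, 1) : Heis n)) ^ 2) with hM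
  have hM0 : 0 ≤ M := le_max_of_le_right (by positivity)
  refine (lt_of_le_of_lt (iSup₂_le fun E hE => ?_) (lam_ball (n := n) i (M + 1) (by positivity)).2).ne
  rcases (E ∩ {p | p.1 i = 0}).eq_empty_or_nonempty with h0 | ⟨w, hw, hw0⟩
  · rw [← lam_inter_W, h0]; simp
  · have hw0 : w.1 i = 0 := hw0
    rw [← lam_trans_W h i (heisInv w) (by simp [heisInv, hw0]) E]
    refine measure_mono ?_
    rintro _ ⟨x, hx, rfl⟩
    rw [mem_ball_zero_iff]
    have := hF.diam _ hE w hw x hx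
    rw [h.eqN] at this
    exact (h.norm_le i _ 1 this).trans_lt (by linarith)

lemma Tht_SH (i : Fin n) : Tht i (FS ρ) ≤ Tht i (FH ρ) := by
  refine iSup₂_le fun E hE => ?_
  refine le_iSup₂_of_le (f := fun (E : Set (Heis n)) (_ : (E, (1:ℝ)) ∈ FH ρ) => lam i E) E ?_ le_rfl
  have := (h.gS i)
  exact ⟨this.pos _ hE, this.diam _ hE⟩

lemma FH_FS (e : Set (Heis n) × ℝ) (he : e ∈ FH ρ) : ∃ e' ∈ FS ρ, e.1 ⊆ e'.1 ∧ e'.2 = 2 * e.2 := by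
  rcases e.1.eq_empty_or_nonempty with h0 | ⟨x, hx⟩
  · exact ⟨_, ⟨0, e.2, he.1, rfl⟩, by simp [h0], rfl⟩
  · exact ⟨_, ⟨x, e.2, he.1, rfl⟩, fun y hy => he.2 x hx y hy, rfl⟩

lemma Tht_HS (i : Fin n) :
    Tht i (FH ρ) ≤ Tht i (FS ρ) * ENNReal.ofReal 2 ^ (2 * (n : ℝ) + 1) := by
  refine iSup₂_le fun E hE => ?_
  obtain ⟨e', he', h1, h2⟩ := FH_FS h _ hE
  have := Tht_le i (h.gS i) he'
  rw [h2] at this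
  simp only [mul_one] at this
  exact (measure_mono h1).trans this

end PartD

open scoped ENNReal

section PartE
open Set Filter Topology MeasureTheory

variable {n : ℕ}

structure Loc (ρ : Heis n → Heis n → ℝ) (i : Fin n) (c ε : ℝ) (U : Set (Heis n))
    (f : Heis n → ℝ) (D : Heis n → Heis n → ℝ) : Prop where
  hd : HD ρ
  opn : IsOpen U
  cvx : Convex ℝ U
  bdd : Bornology.IsBounded U
  mor : ∀ q ∈ U, IsHeisHomMorphR (D q)
  diff : ∀ q ∈ U, ∀ ε : ℝ, 0 < ε → ∃ r > 0, ∀ x : Heis n, ρ q x < r →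
        |f x - f q - D q (heisMul (heisInv q) x)| ≤ ε * ρ q x
  close : ∀ q ∈ U, ∀ x, |D q x - c * x.1 i| ≤ ε * ρ 0 x
  cpos : 0 < c
  epos : 0 < ε
  small : 4 * ε / c * ρ 0 (es i 1) ≤ 1

lemma mor_es (i : Fin n) {L : Heis n → ℝ} (hL : IsHeisHomMorphR L) (u : ℝ) :
    L (es i u) = u * L (es i 1) := by
  have h0 : L 0 = 0 := by
    have := hL.1 0 0
    rw [hm_zero] at this; linarith
  have hp : ∀ u, 0 < u → L (es i u) = u * L (es i 1) := fun u hu => by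
    rw [← hL.2 u hu, dil_es, mul_one]
  rcases lt_trichotomy u 0 with hs | hs | hs
  · have h1 := hL.1 (es i u) (es i (-u))
    rw [es_add, add_neg_cancel, es_zero, h0, hp (-u) (by linarith)] at h1
    linarith
  · subst hs; rw [es_zero, h0, zero_mul]
  · exact hp u hs

lemma prj_back (i : Fin n) (x : Heis n) : heisMul (prj i x) (es i (x.1 i)) = x := by
  rw [prj, hm_assoc, es_add, neg_add_cancel, es_zero, hm_zero]

lemma line_cont (i : Fin n) (g : Heis n) : Continuous (fun u : ℝ => heisMul g (es i u)) := by
  have : (fun u : ℝ => heisMul g (es i u)) =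
    fun s => (g.1 + Pi.single i s, g.2.1, g.2.2 - s * g.2.1 i / 2) := by
    ext1 s; exact hm_es i s g
  rw [this]
  have h1 : Continuous (fun s : ℝ => (Pi.single i s : Fin n → ℝ)) :=
    continuous_single (A := fun _ => ℝ) i
  exact Continuous.prodMk (continuous_const.add h1) (by fun_prop)

lemma line_cvx (i : Fin n) (g : Heis n) {U : Set (Heis n)} (hU : Convex ℝ U) :
    Convex ℝ {u : ℝ | heisMul g (es i u) ∈ U} := by
  intro u hu v hv a b ha hb hab
  have := hU hu hv ha hb hab
  show heisMul g (es i (a • u + b • v)) ∈ U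
  convert this using 1
  simp only [hm_es]
  refine Prod.ext ?_ (Prod.ext ?_ ?_)
  · ext j
    by_cases hj : j = i
    · subst hj
      simp
      linear_combination -(g.1 j) * hab
    · simp [hj]
      linear_combination -(g.1 j) * hab
  · ext j
    simp
    linear_combination -(g.2.1 j) * hab
  · simp
    linear_combination -(g.2.2) * hab

variable {ρ : Heis n → Heis n → ℝ} {i : Fin n} {c ε : ℝ} {U : Set (Heis n)}
    {f : Heis n → ℝ} {D : Heis n → Heis n → ℝ} (h : Loc ρ i c ε U f D)
include h

lemma Loc.deriv (g : Heis n) (u : ℝ) (hu : heisMul g (es i u) ∈ U) :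
    HasDerivAt (fun u => f (heisMul g (es i u))) (D (heisMul g (es i u)) (es i 1)) u := by
  rw [hasDerivAt_iff_isLittleO, Asymptotics.isLittleO_iff]
  intro k hk
  have hN := h.hd.N1_pos i
  obtain ⟨r, hr, h1⟩ := h.diff _ hu (k / ρ 0 (es i 1)) (by positivity)
  have h2 : ∀ u', ρ (heisMul g (es i u)) (heisMul g (es i u')) = |u' - u| * ρ 0 (es i 1) := by
    intro u'
    rw [h.hd.left, h.hd.eqN, es_inv, es_add, h.hd.N_es, neg_add_eq_sub]
  have h3 : ∀ᶠ u' in 𝓝 u, |u' - u| * ρ 0 (es i 1) < r := by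
    have : Continuous (fun u' => |u' - u| * ρ 0 (es i 1)) := by fun_prop
    exact (this.tendsto u).eventually (gt_mem_nhds (a := r) (by simpa using hr))
  filter_upwards [h3] with u' hu'
  have h4 := h1 (heisMul g (es i u')) (by rw [h2]; exact hu')
  have h5 : heisMul (heisInv (heisMul g (es i u))) (heisMul g (es i u')) = es i (u' - u) := by
    have : heisMul g (es i u') = heisMul (heisMul g (es i u)) (es i (u' - u)) := by
      rw [hm_assoc, es_add]; congr 2; ring
    rw [this, inv_hm_cancel]
  rw [h5, mor_es i (h.mor _ hu), h2] at h4
  rw [Real.norm_eq_abs, Real.norm_eq_abs, smul_eq_mul]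
  refine h4.trans (le_of_eq ?_)
  field_simp

lemma Loc.der_pos (q : Heis n) (hq : q ∈ U) : 0 < D q (es i 1) := by
  have h1 := h.close q hq (es i 1)
  have h2 : (es i 1).1 i = 1 := by simp [es]
  rw [h2, mul_one, abs_le] at h1
  have h3 := h.small
  have hc := h.cpos
  rw [div_mul_eq_mul_div, div_le_one hc] at h3
  nlinarith [h.cpos, h1.1]

lemma Loc.inj : InjOn (prj i) {x ∈ U | f x = 0} := by
  have key : ∀ x ∈ {x ∈ U | f x = 0}, ∀ x' ∈ {x ∈ U | f x = 0}, prj i x = prj i x' →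
      ¬ x.1 i < x'.1 i := by
    rintro x ⟨hx, hx0⟩ x' ⟨hx', hx0'⟩ hp hlt
    have hm : StrictMonoOn (fun u => f (heisMul (prj i x) (es i u)))
        {u : ℝ | heisMul (prj i x) (es i u) ∈ U} := by
      refine strictMonoOn_of_deriv_pos (line_cvx i _ h.cvx)
        (fun u hu => (h.deriv _ u hu).continuousAt.continuousWithinAt) (fun u hu => ?_)
      have hu := interior_subset hu
      rw [(h.deriv _ u hu).deriv]
      exact h.der_pos _ hu
    have := hm (a := x.1 i) (by show _ ∈ U; rw [prj_back]; exact hx)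
      (b := x'.1 i) (by show _ ∈ U; rw [hp, prj_back]; exact hx') hlt
    simp only [prj_back] at this
    rw [hp, prj_back, hx0, hx0'] at this
    exact lt_irrefl _ this
  intro x hx x' hx' hp
  have h1 := key x hx x' hx' hp
  have h2 := key x' hx' x hx hp.symm
  rw [← prj_back i x, ← prj_back i x', hp, le_antisymm (not_lt.1 h2) (not_lt.1 h1)]

lemma Loc.cont : ContinuousOn f U := by
  intro q hq
  refine ContinuousAt.continuousWithinAt ?_
  rw [Metric.continuousAt_iff']
  intro e he
  obtain ⟨r, hr, h1⟩ := h.diff q hq 1 one_pos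
  have hc : Continuous (fun x : Heis n => c * |(heisMul (heisInv q) x).1 i|) := by
    have := hm_cont_left (heisInv q)
    fun_prop
  have hc2 := (hc.tendsto q).eventually (gt_mem_nhds (a := e / 2)
    (by rw [inv_hm]; simpa using he))
  have he0 := h.epos
  filter_upwards [h.hd.nhd i q r hr, hc2, h.hd.nhd i q (e / (2 * (ε + 1))) (by positivity)]
    with x hx1 hx2 hx3
  have h2 := h1 x hx1
  have h3 := h.close q hq (heisMul (heisInv q) x)
  rw [← h.hd.eqN] at h3
  rw [lt_div_iff₀ (by positivity)] at hx3
  rw [Real.dist_eq, abs_lt]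
  rw [abs_le] at h2 h3
  have h4 := abs_le.1 (le_refl |(heisMul (heisInv q) x).1 i|)
  have h5 := mul_le_mul_of_nonneg_left h4.1 h.cpos.le
  have h6 := mul_le_mul_of_nonneg_left h4.2 h.cpos.le
  constructor <;> nlinarith

lemma Loc.meas : MeasurableSet {x ∈ U | f x = 0} := by
  have h1 : IsOpen (U ∩ f ⁻¹' {0}ᶜ) := h.cont.isOpen_inter_preimage h.opn isOpen_compl_singleton
  have h2 : {x ∈ U | f x = 0} = U \ (U ∩ f ⁻¹' {0}ᶜ) := by
    ext x; simp
  rw [h2]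
  exact h.opn.measurableSet.diff h1.measurableSet

lemma Loc.exists_mu : ∃ μ : Measure (Heis n), IsFiniteMeasure μ ∧
    ∀ E, μ E = lam i (prj i '' (E ∩ {x ∈ U | f x = 0})) := by
  set S := {x ∈ U | f x = 0} with hS
  have he := (prj_continuous i).continuousOn.measurableEmbedding h.meas h.inj
  have hv : MeasurableEmbedding (Subtype.val : S → Heis n) := MeasurableEmbedding.subtype_coe h.meas
  have key : ∀ E, (((lam i).comap (fun x : S => prj i x.1)).map Subtype.val) E =
      lam i (prj i '' (E ∩ S)) := by
    intro E
    rw [hv.map_apply]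
    refine (he.comap_apply (lam i) _).trans ?_
    congr 1
    ext y
    constructor
    · rintro ⟨x, hx, rfl⟩; exact ⟨x.1, ⟨hx, x.2⟩, rfl⟩
    · rintro ⟨x, hx, rfl⟩; exact ⟨⟨x, hx.2⟩, hx.1, rfl⟩
  refine ⟨_, ⟨?_⟩, key⟩
  rw [key]
  have h1 : IsCompact (prj i '' closure U) := h.bdd.isCompact_closure.image (prj_continuous i)
  obtain ⟨R, hR, h2⟩ := h1.isBounded.subset_ball_lt 0 0
  refine lt_of_le_of_lt (measure_mono ?_) (lam_ball (n := n) i R hR).2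
  exact (image_mono (fun x hx => subset_closure hx.2.1)).trans h2

lemma Loc.point (p : Heis n) (hp : p ∈ U) (hp0 : f p = 0) : ∃ r > 0, ∀ x, ρ p x < r →
    x ∈ U ∧ |f x - c * (heisMul (heisInv p) x).1 i| ≤ 2 * ε * ρ p x := by
  obtain ⟨r1, hr1, h1⟩ := h.diff p hp ε h.epos
  obtain ⟨r2, hr2, h2⟩ := h.hd.nhd' i p (h.opn.mem_nhds hp)
  refine ⟨min r1 r2, lt_min hr1 hr2, fun x hx => ⟨h2 x (hx.trans_le (min_le_right _ _)), ?_⟩⟩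
  have h3 := h1 x (hx.trans_le (min_le_left _ _))
  have h4 := h.close p hp (heisMul (heisInv p) x)
  rw [← h.hd.eqN] at h4
  rw [abs_le] at *
  constructor <;> linarith

lemma Loc.s0pos : 0 < 4 * ε / c * ρ 0 (es i 1) := by
  have := h.epos
  have := h.cpos
  have := h.hd.N1_pos i
  positivity

lemma Loc.upper {F : Set (Set (Heis n) × ℝ)} (hF : GInv ρ F) (μ : Measure (Heis n))
    (hμ : ∀ E, μ E = lam i (prj i '' (E ∩ {x ∈ U | f x = 0})))
    (A : Set (Heis n)) (hA : A ⊆ {x ∈ U | f x = 0}) :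
    μ A ≤ Tht i F * ENNReal.ofReal (1 + 2 * (4 * ε / c * ρ 0 (es i 1))) ^ (2 * (n : ℝ) + 1) *
      Psi F (2 * (n : ℝ) + 1) A := by
  have hd : 0 < 2 * (n : ℝ) + 1 := by positivity
  have hs := h.s0pos
  set s := 4 * ε / c * ρ 0 (es i 1) with hsd
  have hk : ENNReal.ofReal (1 + 2 * s) ^ (2 * (n : ℝ) + 1) ≠ 0 :=
    (ENNReal.rpow_pos (ENNReal.ofReal_pos.2 (by positivity)) ENNReal.ofReal_ne_top).ne'
  have hk' : ENNReal.ofReal (1 + 2 * s) ^ (2 * (n : ℝ) + 1) ≠ ⊤ :=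
    ENNReal.rpow_ne_top_of_nonneg hd.le ENNReal.ofReal_ne_top
  refine upper_density μ A _ (mul_ne_zero (Tht_pos h.hd i hF) hk)
    (ENNReal.mul_ne_top (Tht_top h.hd i hF) hk') fun p hp => ?_
  obtain ⟨r, hr, h1⟩ := h.point p (hA hp).1 (hA hp).2
  refine ⟨r, hr, ?_⟩
  rintro ⟨E, δ⟩ he hpE hδ
  have hδ0 : 0 < δ := hF.pos _ he
  simp only at hδ hpE ⊢
  rw [hμ, ← lam_prj_mul i (heisInv p)]
  obtain ⟨E', hE', h2⟩ := hF.enl _ (hF.trans h.hd (heisInv p) he) (s * δ) (by positivity)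
  have h3 : prj i '' (heisMul (heisInv p) '' (E ∩ {x ∈ U | f x = 0})) ⊆ E' := by
    rintro _ ⟨_, ⟨x, ⟨hxE, hxU, hx0⟩, rfl⟩, rfl⟩
    refine h2 _ ⟨x, hxE, rfl⟩ _ ?_
    have hx : ρ p x ≤ δ := hF.diam _ he p hpE x hxE
    have h4 := (h1 x (hx.trans_lt hδ)).2
    rw [prj, h.hd.mulN, h.hd.N_es, abs_neg]
    rw [hx0, zero_sub, abs_neg, abs_mul, abs_of_pos h.cpos] at h4
    have hc := h.cpos
    have he := h.epos
    have h5 : |(heisMul (heisInv p) x).1 i| ≤ 4 * ε / c * δ := by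
      rw [div_mul_eq_mul_div, le_div_iff₀ hc]
      nlinarith [mul_le_mul_of_nonneg_left hx he.le, mul_pos he hδ0]
    refine (mul_le_mul_of_nonneg_right h5 (h.hd.N1_pos i).le).trans (le_of_eq ?_)
    rw [hsd]; ring
  refine (measure_mono h3).trans ((Tht_le i hF hE').trans (le_of_eq ?_))
  simp only
  rw [show δ + 2 * (s * δ) = (1 + 2 * s) * δ by ring, ENNReal.ofReal_mul (by positivity),
    ENNReal.mul_rpow_of_nonneg _ _ hd.le, mul_assoc]

lemma Loc.lower {F : Set (Set (Heis n) × ℝ)} (hF : GInv ρ F) (μ : Measure (Heis n))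
    [IsFiniteMeasure μ] (hμ : ∀ E, μ E = lam i (prj i '' (E ∩ {x ∈ U | f x = 0})))
    (A : Set (Heis n)) (hA : A ⊆ {x ∈ U | f x = 0}) :
    Tht i F * Psi F (2 * (n : ℝ) + 1) A ≤
      ENNReal.ofReal (1 + 2 * (4 * ε / c * ρ 0 (es i 1))) ^ (2 * (n : ℝ) + 1) * μ A := by
  have hd : 0 < 2 * (n : ℝ) + 1 := by positivity
  have hs := h.s0pos
  have hs1 := h.small
  have hN := h.hd.N1_pos i
  have hc := h.cpos
  have hε0 := h.epos
  set s := 4 * ε / c * ρ 0 (es i 1) with hsd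
  have hk : ENNReal.ofReal (1 + 2 * s) ^ (2 * (n : ℝ) + 1) ≠ 0 :=
    (ENNReal.rpow_pos (ENNReal.ofReal_pos.2 (by positivity)) ENNReal.ofReal_ne_top).ne'
  have hk' : ENNReal.ofReal (1 + 2 * s) ^ (2 * (n : ℝ) + 1) ≠ ⊤ :=
    ENNReal.rpow_ne_top_of_nonneg hd.le ENNReal.ofReal_ne_top
  set κ := ENNReal.ofReal (1 + 2 * s) ^ (2 * (n : ℝ) + 1) with hκ
  rw [Tht]
  simp only [ENNReal.iSup_mul]
  refine iSup₂_le fun E1 hE1 => ?_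
  by_cases h0 : lam i E1 = 0
  · simp [h0]
  have hE1top : lam i E1 ≠ ⊤ := by
    refine ne_top_of_le_ne_top (Tht_top h.hd i hF) ?_
    have := Tht_le i hF hE1
    simpa using this
  suffices hh : lam i E1 / κ * Psi F (2 * (n : ℝ) + 1) A ≤ μ A by
    calc lam i E1 * Psi F (2 * (n : ℝ) + 1) A
        = κ * (lam i E1 / κ * Psi F (2 * (n : ℝ) + 1) A) := by
          rw [← mul_assoc, ENNReal.mul_div_cancel hk hk']
      _ ≤ κ * μ A := by gcongr
  obtain ⟨w, hw, hw0⟩ : (E1 ∩ {p | p.1 i = 0}).Nonempty := by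
    rw [nonempty_iff_ne_empty]
    intro h1
    rw [← lam_inter_W, h1] at h0
    simp at h0
  have hw0 : w.1 i = 0 := hw0
  refine lower_density (h.hd.metFor i) hF.toGauge hd μ A _ (ENNReal.div_ne_zero.2 ⟨h0, hk'⟩)
    (ENNReal.div_ne_top hE1top hk) fun p hp e he => ?_
  obtain ⟨r0, hr0, h1⟩ := h.point p (hA hp).1 (hA hp).2
  obtain ⟨r, hr, hrr⟩ : ∃ r, 0 < r ∧ 3 * r < min r0 e := 
    ⟨min r0 e / 4, by positivity, by linarith [lt_min hr0 he]⟩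
  have hrr0 := hrr.trans_le (min_le_left _ _)
  have hrre := hrr.trans_le (min_le_right _ _)
  have hE2 := hF.trans h.hd (heisInv w) hE1
  have hE3 := hF.dil r hr _ hE2
  set E3 := heisDil r '' (heisMul (heisInv w) '' E1) with hE3d
  have hE3l : lam i E3 = ENNReal.ofReal r ^ (2 * (n : ℝ) + 1) * lam i E1 := by
    rw [hE3d, lam_dil i r hr, lam_trans_W h.hd i (heisInv w) (by simp [heisInv, hw0])]
  have h03 : (0 : Heis n) ∈ E3 := ⟨0, ⟨w, hw, inv_hm w⟩, dil_zero r⟩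
  have hN3 : ∀ x ∈ E3, ρ 0 x ≤ r := fun x hx => by
    have := hF.diam _ hE3 0 h03 x hx
    simpa using this
  have hpE3 := hF.trans h.hd p hE3
  obtain ⟨E4, hE4, h2⟩ := hF.enl _ hpE3 (s * r) (by positivity)
  simp only [mul_one] at hE4
  refine ⟨_, hE4, h2 p ⟨0, h03, hm_zero p⟩ p ?_, ?_, ?_⟩
  · rw [(h.hd.zero p p).2 rfl]; positivity
  · show r + 2 * (s * r) < e
    nlinarith
  · simp only
    rw [show r + 2 * (s * r) = (1 + 2 * s) * r by ring, ENNReal.ofReal_mul (by positivity),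
      ENNReal.mul_rpow_of_nonneg _ _ hd.le, ← hκ, ← mul_assoc, ENNReal.div_mul_cancel hk hk',
      mul_comm, ← hE3l, ← lam_inter_W, hμ, ← lam_prj_mul i (heisInv p)]
    refine measure_mono ?_
    rintro w' ⟨hw', hw'0⟩
    have hw'0 : w'.1 i = 0 := hw'0
    have hwN := hN3 w' hw'
    set a := 4 * ε / c * r with ha
    have ha0 : 0 < a := by positivity
    have haN : a * ρ 0 (es i 1) = s * r := by rw [ha, hsd]; ring
    have hpt : ∀ u, |u| ≤ a → ρ p (heisMul p (heisMul w' (es i u))) ≤ 2 * r := by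
      intro u hu
      rw [h.hd.mulN]
      refine (h.hd.N_mul _ _).trans ?_
      rw [h.hd.N_es]
      nlinarith [mul_le_mul_of_nonneg_right hu hN.le]
    have hpt2 : ∀ u, |u| ≤ a → heisMul p (heisMul w' (es i u)) ∈ U ∧
        |f (heisMul p (heisMul w' (es i u))) - c * u| ≤ 4 * ε * r := by
      intro u hu
      have h3 := hpt u hu
      have h4 := h1 _ (h3.trans_lt (by linarith))
      refine ⟨h4.1, ?_⟩
      have h5 := h4.2
      rw [inv_hm_cancel, hm_fst, hw'0, zero_add, show (es i u).1 i = u by simp [es]] at h5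
      refine h5.trans ?_
      nlinarith
    have hca : c * a = 4 * ε * r := by rw [ha]; field_simp
    have hcont : ContinuousOn (fun u => f (heisMul p (heisMul w' (es i u)))) (Icc (-a) a) := by
      refine h.cont.comp ?_ fun u hu => (hpt2 u (abs_le.2 hu)).1
      exact ((hm_cont_left p).comp (line_cont i w')).continuousOn
    have hivt := intermediate_value_Icc (by linarith : -a ≤ a) hcont
    have hm : (0:ℝ) ∈ Icc (f (heisMul p (heisMul w' (es i (-a)))))
        (f (heisMul p (heisMul w' (es i a)))) := by
      have h5 := (abs_le.1 (hpt2 (-a) (by rw [abs_neg, abs_of_pos ha0])).2).2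
      have h6 := (abs_le.1 (hpt2 a (by rw [abs_of_pos ha0])).2).1
      constructor <;> linarith
    obtain ⟨u, hu, hu0⟩ := hivt hm
    have hu := abs_le.2 hu
    refine ⟨heisMul w' (es i u), ⟨heisMul p (heisMul w' (es i u)), ⟨?_, (hpt2 u hu).1, hu0⟩, 
      inv_hm_cancel _ _⟩, ?_⟩
    · refine h2 (heisMul p w') ⟨w', hw', rfl⟩ _ ?_
      rw [h.hd.left, h.hd.mulN, h.hd.N_es, ← haN]
      exact mul_le_mul_of_nonneg_right hu hN.le
    · rw [prj_es, prj_of_zero i w' hw'0]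

lemma Loc.main {F F' : Set (Set (Heis n) × ℝ)} (hF : GInv ρ F) (hF' : GInv ρ F')
    (A : Set (Heis n)) (hA : A ⊆ {x ∈ U | f x = 0}) :
    Tht i F * Psi F (2 * (n : ℝ) + 1) A ≤
      (ENNReal.ofReal (1 + 2 * (4 * ε / c * ρ 0 (es i 1))) ^ (2 * (n : ℝ) + 1)) ^ 2 *
      (Tht i F' * Psi F' (2 * (n : ℝ) + 1) A) := by
  obtain ⟨μ, h1, h2⟩ := h.exists_mu
  refine (h.lower hF μ h2 A hA).trans ?_
  refine (mul_le_mul_right (h.upper hF' μ h2 A hA) _).trans (le_of_eq ?_)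
  ring

omit h in
lemma loc_thm (hd : HD ρ) (i : Fin n) (K : ℝ≥0∞) (hK : 1 < K) (Ω : Set (Heis n)) (f : Heis n → ℝ)
    (D : Heis n → Heis n → ℝ) (hΩ : IsOpen Ω) (p : Heis n) (hp : p ∈ Ω)
    (hf : ∀ q ∈ Ω, IsHeisHomMorphR (D q) ∧
      ∀ ε : ℝ, 0 < ε → ∃ r > 0, ∀ x : Heis n, ρ q x < r →
        |f x - f q - D q (heisMul (heisInv q) x)| ≤ ε * ρ q x)
    (hD : ∀ ε : ℝ, 0 < ε → ∃ r > 0, ∀ q' ∈ Ω, ρ p q' < r →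
      ∀ x : Heis n, |D p x - D q' x| ≤ ε * ρ 0 x)
    (c : ℝ) (hc : 0 < c) (hDp : ∀ x, D p x = c * x.1 i) :
    ∃ U, IsOpen U ∧ p ∈ U ∧ U ⊆ Ω ∧ MeasurableSet {x ∈ U | f x = 0} ∧
      ∀ F F', GInv ρ F → GInv ρ F' → ∀ A ⊆ {x ∈ U | f x = 0},
        Tht i F * Psi F (2 * (n : ℝ) + 1) A ≤ K * (Tht i F' * Psi F' (2 * (n : ℝ) + 1) A) := by
  have hN := hd.N1_pos i
  obtain ⟨s, hs0, hs1, hs2⟩ : ∃ s : ℝ, 0 < s ∧ s ≤ 1 ∧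
      (ENNReal.ofReal (1 + 2 * s) ^ (2 * (n : ℝ) + 1)) ^ 2 ≤ K := by
    have hcont : Continuous (fun s : ℝ => (ENNReal.ofReal (1 + 2 * s) ^ (2 * (n : ℝ) + 1)) ^ 2) := by
      refine (ENNReal.continuous_pow 2).comp ((ENNReal.continuous_rpow_const).comp
        (ENNReal.continuous_ofReal.comp (by fun_prop)))
    have h1 := (hcont.tendsto 0).eventually (gt_mem_nhds (a := K) (by simpa using hK))
    have h2 : ∀ᶠ s : ℝ in 𝓝[>] 0, (ENNReal.ofReal (1 + 2 * s) ^ (2 * (n : ℝ) + 1)) ^ 2 < K ∧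
      s ∈ Ioc (0:ℝ) 1 := (h1.filter_mono nhdsWithin_le_nhds).and (Ioc_mem_nhdsGT one_pos)
    obtain ⟨s, h3, h4⟩ := h2.exists
    exact ⟨s, h4.1, h4.2, h3.le⟩
  set ε := s * c / (4 * ρ 0 (es i 1)) with hε
  have hε0 : 0 < ε := by positivity
  have hse : 4 * ε / c * ρ 0 (es i 1) = s := by rw [hε]; field_simp
  obtain ⟨r, hr, h1⟩ := hD ε hε0
  obtain ⟨η, hη, h2⟩ := Metric.mem_nhds_iff.1 (inter_mem (hΩ.mem_nhds hp) (hd.nhd i p r hr))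
  have hL : Loc ρ i c ε (Metric.ball p η) f D :=
    { hd := hd
      opn := Metric.isOpen_ball
      cvx := convex_ball p η
      bdd := Metric.isBounded_ball
      mor := fun q hq => (hf q (h2 hq).1).1
      diff := fun q hq => (hf q (h2 hq).1).2
      close := fun q hq x => by
        have := h1 q (h2 hq).1 (h2 hq).2 x
        rwa [hDp, abs_sub_comm] at this
      cpos := hc
      epos := hε0
      small := by rw [hse]; exact hs1 }
  refine ⟨_, hL.opn, Metric.mem_ball_self hη, fun x hx => (h2 hx).1, hL.meas, ?_⟩
  intro F F' hF hF' A hA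
  refine (hL.main hF hF' A hA).trans ?_
  rw [hse]
  gcongr

end PartE

open scoped ENNReal

section PartF
open Set Filter Topology MeasureTheory

variable {n : ℕ}

noncomputable def toC (x y : Fin n → ℝ) : EuclideanSpace ℂ (Fin n) :=
  WithLp.toLp 2 (fun j => (⟨x j, y j⟩ : ℂ))

noncomputable def rotT (T : EuclideanSpace ℂ (Fin n) ≃ₗᵢ[ℂ] EuclideanSpace ℂ (Fin n))
    (g : Heis n) : Heis n :=
  (fun j => (T (toC g.1 g.2.1) j).re, fun j => (T (toC g.1 g.2.1) j).im, g.2.2)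

lemma toC_surj (z : EuclideanSpace ℂ (Fin n)) : toC (fun j => (z j).re) (fun j => (z j).im) = z := by
  ext j; simp [toC]

lemma toC_add (x y x' y' : Fin n → ℝ) : toC (x + x') (y + y') = toC x y + toC x' y' := by
  ext j; apply Complex.ext <;> simp [toC]

lemma toC_neg (x y : Fin n → ℝ) : toC (-x) (-y) = - toC x y := by
  ext j; apply Complex.ext <;> simp [toC]

lemma toC_smul (r : ℝ) (x y : Fin n → ℝ) : toC (r • x) (r • y) = (r : ℂ) • toC x y := by
  ext j; apply Complex.ext <;> simp [toC]

lemma toC_inner (x y x' y' : Fin n → ℝ) : inner ℂ (toC x y) (toC x' y') =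
    (⟨∑ j, (x j * x' j + y j * y' j), ∑ j, (x j * y' j - x' j * y j)⟩ : ℂ) := by
  rw [PiLp.inner_apply]
  apply Complex.ext
  · rw [Complex.re_sum]
    refine Finset.sum_congr rfl fun j _ => ?_
    simp [toC]; ring
  · rw [Complex.im_sum]
    refine Finset.sum_congr rfl fun j _ => ?_
    simp [toC]; ring

lemma toC_cont : Continuous (fun q : Heis n => toC q.1 q.2.1) := by
  unfold toC
  refine (PiLp.continuous_toLp 2 _).comp (continuous_pi fun j => ?_)
  have : (fun q : Heis n => (⟨q.1 j, q.2.1 j⟩ : ℂ)) = fun q => (q.1 j : ℂ) + q.2.1 j * Complex.I := by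
    ext q
    exact Complex.mk_eq_add_mul_I _ _
  rw [this]
  fun_prop

variable (T : EuclideanSpace ℂ (Fin n) ≃ₗᵢ[ℂ] EuclideanSpace ℂ (Fin n))

lemma toC_rot (g : Heis n) : toC (rotT T g).1 (rotT T g).2.1 = T (toC g.1 g.2.1) := toC_surj _

lemma rot_ext {g g' : Heis n} (h1 : toC g.1 g.2.1 = toC g'.1 g'.2.1) (h2 : g.2.2 = g'.2.2) : g = g' := by
  refine Prod.ext ?_ (Prod.ext ?_ h2)
  · ext j
    have := congrArg (fun z : EuclideanSpace ℂ (Fin n) => (z j).re) h1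
    simpa [toC] using this
  · ext j
    have := congrArg (fun z : EuclideanSpace ℂ (Fin n) => (z j).im) h1
    simpa [toC] using this

lemma rot_symm (g : Heis n) : rotT T.symm (rotT T g) = g := by
  refine rot_ext ?_ rfl
  rw [toC_rot, toC_rot, LinearIsometryEquiv.symm_apply_apply]

lemma rot_symm' (g : Heis n) : rotT T (rotT T.symm g) = g := by
  refine rot_ext ?_ rfl
  rw [toC_rot, toC_rot, LinearIsometryEquiv.apply_symm_apply]

lemma rot_cont : Continuous (rotT T) := by
  have h1 : Continuous (fun q : Heis n => T (toC q.1 q.2.1)) := T.continuous.comp toC_cont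
  have h2 : ∀ j, Continuous (fun q : Heis n => T (toC q.1 q.2.1) j) := fun j =>
    (PiLp.continuous_apply 2 _ j).comp h1
  unfold rotT
  refine Continuous.prodMk (continuous_pi fun j => Complex.continuous_re.comp (h2 j))
    (Continuous.prodMk (continuous_pi fun j => Complex.continuous_im.comp (h2 j)) (by fun_prop))

lemma rot_mul (p q : Heis n) : rotT T (heisMul p q) = heisMul (rotT T p) (rotT T q) := by
  refine rot_ext ?_ ?_
  · rw [toC_rot]
    simp only [heisMul]
    rw [toC_add, toC_add, toC_rot, toC_rot, map_add]
  · have h1 := T.inner_map_map (toC p.1 p.2.1) (toC q.1 q.2.1)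
    rw [← toC_rot, ← toC_rot, toC_inner, toC_inner] at h1
    have h2 := (Complex.ext_iff.1 h1).2
    simp only at h2
    simp only [heisMul]
    rw [h2]
    rfl

lemma rot_inv (p : Heis n) : rotT T (heisInv p) = heisInv (rotT T p) := by
  refine rot_ext ?_ rfl
  rw [toC_rot]
  simp only [heisInv]
  rw [toC_neg, toC_neg, toC_rot, map_neg]

lemma rot_dil (r : ℝ) (p : Heis n) : rotT T (heisDil r p) = heisDil r (rotT T p) := by
  refine rot_ext ?_ rfl
  rw [toC_rot]
  simp only [heisDil]
  rw [toC_smul, toC_smul, toC_rot, map_smul]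

lemma rot_N {ρ : Heis n → Heis n → ℝ} (h : HD ρ) (g : Heis n) : ρ 0 (rotT T g) = ρ 0 g := by
  refine h.rot _ _ _ _ _ ?_
  have h1 := T.inner_map_map (toC g.1 g.2.1) (toC g.1 g.2.1)
  rw [← toC_rot, toC_inner, toC_inner] at h1
  have h2 := (Complex.ext_iff.1 h1).1
  simp only [← pow_two] at h2
  exact h2

lemma rot_iso {ρ : Heis n → Heis n → ℝ} (h : HD ρ) (p q : Heis n) :
    ρ (rotT T p) (rotT T q) = ρ p q := by
  rw [h.eqN, ← rot_inv, ← rot_mul, rot_N T h, ← h.eqN]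

lemma mor_lin {L : Heis n → ℝ} (hL : IsHeisHomMorphR L) :
    ∃ a b : Fin n → ℝ, ∀ g, L g = ∑ j, (a j * g.1 j + b j * g.2.1 j) := by
  have hv : ∀ t, L ((0, 0, t) : Heis n) = 0 := by
    intro t
    have h1 := hL.2 2 (by norm_num) (0, 0, t)
    have h2 := hL.1 (0, 0, 2 * t) (0, 0, 2 * t)
    have h3 := hL.1 (0, 0, t) (0, 0, t)
    rw [hm_ver] at h2 h3
    have h4 : heisDil 2 ((0, 0, t) : Heis n) = (0, 0, 2 * t + 2 * t) := by
      unfold heisDil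
      refine Prod.ext (by simp) (Prod.ext (by simp) ?_)
      simp; ring
    rw [h4, h2] at h1
    rw [← two_mul t] at h3
    linarith
  have hz : ∀ x y t, L (x, y, t) = L (x, y, 0) := by
    intro x y t
    have := hL.1 (x, y, 0) (0, 0, t)
    rwa [hm_ver, zero_add, hv, add_zero] at this
  have hadd : ∀ x y x' y', L (x + x', y + y', 0) = L (x, y, 0) + L (x', y', 0) := by
    intro x y x' y'
    have := hL.1 (x, y, 0) (x', y', 0)
    rw [← this]
    exact (hz _ _ _).symm
  have h00 : L (0, 0, 0) = 0 := hv 0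
  have hpos : ∀ r : ℝ, 0 < r → ∀ x y, L (r • x, r • y, 0) = r * L (x, y, 0) := by
    intro r hr x y
    rw [← hL.2 r hr]
    simp [heisDil]
  let ℓ : ((Fin n → ℝ) × (Fin n → ℝ)) →ₗ[ℝ] ℝ :=
    { toFun := fun z => L (z.1, z.2, 0)
      map_add' := fun z z' => hadd _ _ _ _
      map_smul' := fun r z => by
        simp only [RingHom.id_apply, smul_eq_mul, Prod.smul_fst, Prod.smul_snd]
        rcases lt_trichotomy r 0 with hr | hr | hr
        · have h1 := hpos (-r) (by linarith) z.1 z.2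
          have h2 := hadd (r • z.1) (r • z.2) (-r • z.1) (-r • z.2)
          rw [← add_smul, ← add_smul, add_neg_cancel, zero_smul, zero_smul, h00, h1] at h2
          linarith
        · subst hr; rw [zero_smul, zero_smul, h00, zero_mul]
        · exact hpos r hr _ _ }
  have h1 : ∀ x, L (x, 0, 0) = ∑ j, x j • L (fun k => if j = k then 1 else 0, 0, 0) :=
    fun x => LinearMap.pi_apply_eq_sum_univ (ℓ.comp (LinearMap.inl ℝ _ _)) x
  have h2 : ∀ y, L (0, y, 0) = ∑ j, y j • L (0, fun k => if j = k then 1 else 0, 0) :=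
    fun x => LinearMap.pi_apply_eq_sum_univ (ℓ.comp (LinearMap.inr ℝ _ _)) x
  refine ⟨fun j => L (fun k => if j = k then 1 else 0, 0, 0),
    fun j => L (0, fun k => if j = k then 1 else 0, 0), fun g => ?_⟩
  have h3 := hadd g.1 0 0 g.2.1
  rw [add_zero, zero_add, h1, h2, ← hz g.1 g.2.1 g.2.2] at h3
  refine h3.trans ?_
  rw [← Finset.sum_add_distrib]
  refine Finset.sum_congr rfl fun j _ => ?_
  simp only [smul_eq_mul]
  rw [mul_comm, mul_comm (g.2.1 j)]

lemma exists_rot (i : Fin n) {L : Heis n → ℝ} (hL : IsHeisHomMorphR L) (hL0 : L ≠ 0) :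
    ∃ (T : EuclideanSpace ℂ (Fin n) ≃ₗᵢ[ℂ] EuclideanSpace ℂ (Fin n)) (c : ℝ), 0 < c ∧
      ∀ g, L g = c * (rotT T g).1 i := by
  obtain ⟨a, b, hab⟩ := mor_lin hL
  have hin : ∀ g, L g = (inner ℂ (toC a b) (toC g.1 g.2.1)).re := by
    intro g; rw [toC_inner, hab]
  have hv : toC a b ≠ 0 := by
    intro h0
    apply hL0
    ext g
    rw [hin, h0]; simp
  have hn : 0 < ‖toC a b‖ := norm_pos_iff.2 hv
  set w : EuclideanSpace ℂ (Fin n) := ((‖toC a b‖⁻¹ : ℝ) : ℂ) • toC a b with hw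
  have hwn : ‖w‖ = 1 := by
    rw [hw, norm_smul, Complex.norm_real, norm_inv, norm_norm, inv_mul_cancel₀ hn.ne']
  have horth : Orthonormal ℂ (({i} : Set (Fin n)).domRestrict (fun _ => w)) := by
    constructor
    · intro _; exact hwn
    · rintro ⟨x, hx⟩ ⟨y, hy⟩ hxy
      exact absurd (Subtype.ext ((mem_singleton_iff.1 hx).trans (mem_singleton_iff.1 hy).symm)) hxy
  obtain ⟨B, hB⟩ := horth.exists_orthonormalBasis_extension_of_card_eq (by simp)
  refine ⟨B.repr, ‖toC a b‖, hn, fun g => ?_⟩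
  have h1 : (rotT B.repr g).1 i = (inner ℂ w (toC g.1 g.2.1)).re := by
    show ((B.repr (toC g.1 g.2.1)) i).re = _
    rw [B.repr_apply_apply, hB i rfl]
  rw [h1, hin, hw, inner_smul_left, Complex.conj_ofReal, Complex.re_ofReal_mul, ← mul_assoc,
    mul_inv_cancel₀ hn.ne', one_mul]

variable {ρ : Heis n → Heis n → ℝ}

lemma Psi_rot (hd : HD ρ) {F : Set (Set (Heis n) × ℝ)} (hF : GInv ρ F) (d : ℝ) (A : Set (Heis n)) :
    Psi F d (rotT T '' A) = Psi F d A := by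
  refine le_antisymm (Psi_image_le _ (hF.iso _ (fun y => ⟨_, rot_symm' T y⟩) (rot_iso T hd)) A) ?_
  have := Psi_image_le (d := d) _
    (hF.iso _ (fun y => ⟨_, rot_symm T y⟩) (rot_iso T.symm hd)) (rotT T '' A)
  rw [image_image] at this
  simpa only [rot_symm, image_id'] using this

lemma loc_rot (hd : HD ρ) (i : Fin n) (K : ℝ≥0∞) (hK : 1 < K) (Ω : Set (Heis n)) (f : Heis n → ℝ)
    (D : Heis n → Heis n → ℝ) (hΩ : IsOpen Ω) (p : Heis n) (hp : p ∈ Ω)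
    (hf : ∀ q ∈ Ω, IsHeisHomMorphR (D q) ∧
      ∀ ε : ℝ, 0 < ε → ∃ r > 0, ∀ x : Heis n, ρ q x < r →
        |f x - f q - D q (heisMul (heisInv q) x)| ≤ ε * ρ q x)
    (hD : ∀ ε : ℝ, 0 < ε → ∃ r > 0, ∀ q' ∈ Ω, ρ p q' < r →
      ∀ x : Heis n, |D p x - D q' x| ≤ ε * ρ 0 x)
    (hDp : D p ≠ 0) :
    ∃ U, IsOpen U ∧ p ∈ U ∧ U ⊆ Ω ∧ MeasurableSet {x ∈ U | f x = 0} ∧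
      ∀ F F', GInv ρ F → GInv ρ F' → ∀ A ⊆ {x ∈ U | f x = 0},
        Tht i F * Psi F (2 * (n : ℝ) + 1) A ≤ K * (Tht i F' * Psi F' (2 * (n : ℝ) + 1) A) := by
  obtain ⟨T, c, hc, hT⟩ := exists_rot i (hf p hp).1 hDp
  have key := loc_thm hd i K hK (rotT T.symm ⁻¹' Ω)
    (fun x => f (rotT T.symm x)) (fun q x => D (rotT T.symm q) (rotT T.symm x))
    (hΩ.preimage (rot_cont T.symm)) (rotT T p) (by rw [mem_preimage, rot_symm]; exact hp)
    (fun q hq => ⟨⟨fun x y => ?_, fun r hr x => ?_⟩, fun ε hε => ?_⟩)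
    (fun ε hε => ?_) c hc (fun x => ?_)
  · obtain ⟨U, hU, hpU, hUΩ, hm, hU2⟩ := key
    refine ⟨rotT T ⁻¹' U, hU.preimage (rot_cont T), hpU, fun x hx => ?_, ?_, ?_⟩
    · have := hUΩ hx
      rwa [mem_preimage, rot_symm] at this
    · have := (rot_cont T).measurable hm
      convert this using 1
      ext x
      simp only [mem_preimage, mem_ofPred_eq, rot_symm]
    · intro F F' hF hF' A hA
      have := hU2 F F' hF hF' (rotT T '' A) ?_
      · rwa [Psi_rot T hd hF, Psi_rot T hd hF'] at this
      · rintro _ ⟨x, hx, rfl⟩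
        refine ⟨(hA hx).1, ?_⟩
        rw [rot_symm]; exact (hA hx).2
  · simp only [rot_mul]; exact (hf _ hq).1.1 _ _
  · simp only [rot_dil]; exact (hf _ hq).1.2 _ hr _
  · obtain ⟨r, hr, h1⟩ := (hf _ hq).2 ε hε
    refine ⟨r, hr, fun x hx => ?_⟩
    have h2 := h1 (rotT T.symm x) (by rwa [rot_iso T.symm hd])
    rwa [rot_iso T.symm hd, ← rot_inv, ← rot_mul] at h2
  · obtain ⟨r, hr, h1⟩ := hD ε hε
    refine ⟨r, hr, fun q' hq' hq2 x => ?_⟩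
    have h2 := h1 (rotT T.symm q') hq' (by
      rw [← rot_iso T.symm hd, rot_symm] at hq2; exact hq2) (rotT T.symm x)
    rw [rot_N T.symm hd] at h2
    simp only [rot_symm]; exact h2
  · simp only [rot_symm]
    rw [hT, rot_symm']

end PartF

open scoped ENNReal

section PartG
open Set Filter Topology MeasureTheory

variable {n : ℕ}

def Good (ρ : Heis n → Heis n → ℝ) (i : Fin n) (K : ℝ≥0∞) (G : Set (Heis n)) : Prop :=
  MeasurableSet G ∧ ∀ F F', GInv ρ F → GInv ρ F' → ∀ A ⊆ G,
    Tht i F * Psi F (2 * (n : ℝ) + 1) A ≤ K * (Tht i F' * Psi F' (2 * (n : ℝ) + 1) A)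

variable {ρ : Heis n → Heis n → ℝ}

lemma good_empty (i : Fin n) (K : ℝ≥0∞) : Good ρ i K ∅ := by
  refine ⟨MeasurableSet.empty, fun F F' hF hF' A hA => ?_⟩
  rw [subset_empty_iff.1 hA, Psi_empty hF.toGauge (by positivity)]
  simp

lemma hyp_cover (hd : HD ρ) (i : Fin n) (K : ℝ≥0∞) (hK : 1 < K) (Sig : Set (Heis n))
    (hS : IsC1HHypersurface ρ Sig) : ∃ 𝒢 : Set (Set (Heis n)), 𝒢.Countable ∧
      (∀ G ∈ 𝒢, Good ρ i K G) ∧ Sig ⊆ ⋃₀ 𝒢 := by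
  have h1 : ∀ p : Heis n, ∃ G, p ∈ Sig → G ∈ 𝓝[Sig] p ∧ Good ρ i K G := by
    intro p
    by_cases hp : p ∈ Sig
    · obtain ⟨Ω, f, D, hΩ, hpΩ, hSΩ, hf, hDc, hD0⟩ := hS p hp
      obtain ⟨U, hU, hpU, hUΩ, hm, hU2⟩ := loc_rot hd i K hK Ω f D hΩ p hpΩ hf (hDc p hpΩ)
        (hD0 p hpΩ).1
      refine ⟨_, fun _ => ⟨?_, hm, hU2⟩⟩
      filter_upwards [self_mem_nhdsWithin, mem_nhdsWithin_of_mem_nhds (hU.mem_nhds hpU)] with x hx1 hx2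
      have : x ∈ Sig ∩ Ω := ⟨hx1, hUΩ hx2⟩
      rw [hSΩ] at this
      exact ⟨hx2, this.2⟩
    · exact ⟨∅, fun h => absurd h hp⟩
  choose G hG using h1
  obtain ⟨t, hts, htc, hcov⟩ := TopologicalSpace.countable_cover_nhdsWithin
    (fun x hx => (hG x hx).1)
  refine ⟨G '' t, htc.image G, ?_, ?_⟩
  · rintro _ ⟨x, hx, rfl⟩; exact (hG x (hts hx)).2
  · rwa [sUnion_image]

lemma glob (hd : HD ρ) (i : Fin n) (K : ℝ≥0∞) (hK : 1 < K) (Sigs : ℕ → Set (Heis n))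
    (hS : ∀ j, IsC1HHypersurface ρ (Sigs j)) {F F' : Set (Set (Heis n) × ℝ)} (hF : GInv ρ F)
    (hF' : GInv ρ F') (A : Set (Heis n)) (hA : Psi F (2 * (n : ℝ) + 1) (A \ ⋃ j, Sigs j) = 0) :
    Tht i F * Psi F (2 * (n : ℝ) + 1) A ≤ K * (Tht i F' * Psi F' (2 * (n : ℝ) + 1) A) := by
  have hd0 : 0 < 2 * (n : ℝ) + 1 := by positivity
  choose 𝒢 h1 h2 h3 using fun j => hyp_cover hd i K hK (Sigs j) (hS j)
  obtain ⟨e, he⟩ := ((countable_iUnion h1).insert ∅).exists_eq_range (insert_nonempty _ _)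
  have heg : ∀ k, Good ρ i K (e k) := by
    intro k
    have : e k ∈ insert ∅ (⋃ j, 𝒢 j) := by rw [he]; exact mem_range_self k
    rcases this with h0 | h0
    · rw [h0]; exact good_empty i K
    · obtain ⟨j, hj⟩ := mem_iUnion.1 h0
      exact h2 j _ hj
  have hcov : ⋃ j, Sigs j ⊆ ⋃ k, e k := by
    refine iUnion_subset fun j x hx => ?_
    obtain ⟨G, hG, hxG⟩ := h3 j hx
    have : G ∈ range e := by rw [← he]; exact Or.inr (mem_iUnion.2 ⟨j, hG⟩)
    obtain ⟨k, rfl⟩ := this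
    exact mem_iUnion.2 ⟨k, hxG⟩
  have hBm : ∀ k, MeasurableSet (disjointed e k) := fun k =>
    MeasurableSet.disjointed (fun k => (heg k).1) k
  have hsub : A ⊆ (A \ ⋃ j, Sigs j) ∪ ⋃ k, (A ∩ disjointed e k) := by
    intro x hx
    by_cases hxs : x ∈ ⋃ j, Sigs j
    · right
      rw [← inter_iUnion, iUnion_disjointed]
      exact ⟨hx, hcov hxs⟩
    · exact Or.inl ⟨hx, hxs⟩
  have h4 : Psi F (2 * (n : ℝ) + 1) A ≤ ∑' k, Psi F (2 * (n : ℝ) + 1) (A ∩ disjointed e k) := by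
    refine (Psi_mono hsub).trans ?_
    refine (measure_union_le (μ := PsiOuter hF.toGauge hd0) _ _).trans ?_
    change Psi F _ _ + Psi F _ _ ≤ _
    rw [hA, zero_add]
    exact Psi_iUnion hF.toGauge hd0 _
  calc Tht i F * Psi F (2 * (n : ℝ) + 1) A
      ≤ Tht i F * ∑' k, Psi F (2 * (n : ℝ) + 1) (A ∩ disjointed e k) := by gcongr
    _ = ∑' k, Tht i F * Psi F (2 * (n : ℝ) + 1) (A ∩ disjointed e k) := ENNReal.tsum_mul_left.symm
    _ ≤ ∑' k, K * (Tht i F' * Psi F' (2 * (n : ℝ) + 1) (A ∩ disjointed e k)) :=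
        ENNReal.tsum_le_tsum fun k => (heg k).2 F F' hF hF' _
          (inter_subset_right.trans (disjointed_subset e k))
    _ = K * (Tht i F' * ∑' k, Psi F' (2 * (n : ℝ) + 1) (A ∩ disjointed e k)) := by
        rw [ENNReal.tsum_mul_left, ENNReal.tsum_mul_left]
    _ ≤ _ := by
        gcongr
        exact Psi_tsum (hd.metFor i) hF'.toGauge hd0 hBm (disjoint_disjointed e) A

lemma glob1 (hd : HD ρ) (i : Fin n) (Sigs : ℕ → Set (Heis n))
    (hS : ∀ j, IsC1HHypersurface ρ (Sigs j)) {F F' : Set (Set (Heis n) × ℝ)} (hF : GInv ρ F)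
    (hF' : GInv ρ F') (A : Set (Heis n)) (hA : Psi F (2 * (n : ℝ) + 1) (A \ ⋃ j, Sigs j) = 0) :
    Tht i F * Psi F (2 * (n : ℝ) + 1) A ≤ Tht i F' * Psi F' (2 * (n : ℝ) + 1) A := by
  set y := Tht i F' * Psi F' (2 * (n : ℝ) + 1) A
  have h1 : Tendsto (fun K : ℝ≥0∞ => K * y) (𝓝[>] 1) (𝓝 (1 * y)) :=
    ENNReal.Tendsto.mul_const (tendsto_id.mono_left nhdsWithin_le_nhds) (Or.inl one_ne_zero)
  have : (𝓝[>] (1 : ℝ≥0∞)).NeBot := nhdsGT_neBot_of_exists_gt ⟨⊤, ENNReal.one_lt_top⟩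
  rw [one_mul] at h1
  refine ge_of_tendsto h1 ?_
  filter_upwards [self_mem_nhdsWithin] with K hK
  exact glob hd i K hK Sigs hS hF hF' A hA

end PartG
/-- In the Heisenberg group `H^n` with a rotationally invariant homogeneous distance `ρ`,
there is a single constant `C ∈ [1, 2^(2n+1)]` such that
`S^(2n+1) ⌞ R = C · H^(2n+1) ⌞ R` for every `(H^n, ℝ)`-rectifiable set `R ⊆ H^n`. -/
theorem spherical_vs_hausdorff_heisenberg
    (n : ℕ) (hn : 1 ≤ n)
    (ρ : Heis n → Heis n → ℝ)
    (hρ_zero : ∀ p q : Heis n, ρ p q = 0 ↔ p = q)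
    (hρ_symm : ∀ p q : Heis n, ρ p q = ρ q p)
    (hρ_triangle : ∀ p q r : Heis n, ρ p r ≤ ρ p q + ρ q r)
    (hρ_left : ∀ g p q : Heis n, ρ (heisMul g p) (heisMul g q) = ρ p q)
    (hρ_hom : ∀ lam : ℝ, 0 < lam → ∀ p q : Heis n,
      ρ (heisDil lam p) (heisDil lam q) = lam * ρ p q)
    (hρ_rot : ∀ (x y x' y' : Fin n → ℝ) (t : ℝ), horSq x y = horSq x' y' →
      ρ 0 (x, y, t) = ρ 0 (x', y', t)) :
    ∃ C : ℝ, 1 ≤ C ∧ C ≤ 2 ^ (2 * n + 1) ∧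
      ∀ R : Set (Heis n),
        sphMeasFun ρ (2 * (n : ℝ) + 1) R < ⊤ →
        (∃ Sigs : ℕ → Set (Heis n),
          (∀ j, IsC1HHypersurface ρ (Sigs j)) ∧
          hausMeasFun ρ (2 * (n : ℝ) + 1) (R \ ⋃ j, Sigs j) = 0) →
        ∀ E : Set (Heis n),
          sphMeasFun ρ (2 * (n : ℝ) + 1) (E ∩ R) =
            ENNReal.ofReal C * hausMeasFun ρ (2 * (n : ℝ) + 1) (E ∩ R) := by
  have h : HD ρ := ⟨hρ_zero, hρ_symm, hρ_triangle, hρ_left, hρ_hom, hρ_rot⟩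
  have hd0 : 0 < 2 * (n : ℝ) + 1 := by positivity
  let i : Fin n := ⟨0, hn⟩
  have hS0 := Tht_pos h i (h.gS i)
  have hSt := Tht_top h i (h.gS i)
  have hHt := Tht_top h i (h.gH i)
  set ΘS := Tht i (FS ρ) with hΘS
  set ΘH := Tht i (FH ρ) with hΘH
  have hct : ΘH / ΘS ≠ ⊤ := ENNReal.div_ne_top hHt hS0
  have h1 : 1 ≤ ΘH / ΘS := by
    rw [ENNReal.le_div_iff_mul_le (Or.inl hS0) (Or.inl hSt), one_mul]
    exact Tht_SH h i
  have h2 : ΘH / ΘS ≤ ENNReal.ofReal (2 ^ (2 * n + 1)) := by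
    have h3 := Tht_HS h i
    have h4 : ENNReal.ofReal 2 ^ (2 * (n : ℝ) + 1) = ENNReal.ofReal (2 ^ (2 * n + 1)) := by
      rw [ENNReal.ofReal_rpow_of_pos (by norm_num)]
      congr 1
      rw [← Real.rpow_natCast]
      congr 1
      push_cast
      ring
    rw [h4, mul_comm] at h3
    exact ENNReal.div_le_of_le_mul h3
  refine ⟨(ΘH / ΘS).toReal, ?_, ?_, ?_⟩
  · have := ENNReal.toReal_mono hct h1
    simpa using this
  · exact ENNReal.toReal_le_of_le_ofReal (by positivity) h2
  · rintro R - ⟨Sigs, hSigs, hnull⟩ E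
    rw [ENNReal.ofReal_toReal hct, sph_eq, haus_eq ρ hd0]
    rw [haus_eq ρ hd0] at hnull
    have hnH : Psi (FH ρ) (2 * (n : ℝ) + 1) ((E ∩ R) \ ⋃ j, Sigs j) = 0 := by
      rw [← nonpos_iff_eq_zero, ← hnull]
      exact Psi_mono (Set.sdiff_subset_sdiff_left Set.inter_subset_right)
    have hnS : Psi (FS ρ) (2 * (n : ℝ) + 1) ((E ∩ R) \ ⋃ j, Sigs j) = 0 := by
      rw [← nonpos_iff_eq_zero]
      refine (Psi_scale hd0.le 2 (by norm_num) (FH_FS h) _).trans ?_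
      rw [hnH, mul_zero]
    have h5 := le_antisymm (glob1 h i Sigs hSigs (h.gS i) (h.gH i) _ hnS)
      (glob1 h i Sigs hSigs (h.gH i) (h.gS i) _ hnH)
    rw [← hΘS, ← hΘH] at h5
    rw [ENNReal.mul_comm_div, ← mul_div_assoc, ← h5, mul_comm ΘS,
      ENNReal.mul_div_cancel_right hS0 hSt]
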